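/- arXiv:math/0305164 — 2 statements merged into one kernel-verified Lean document; each statement's English description precedes it below -/
import Mathlib

section
/- If f : I → I is a piecewise monotonic map of a compact interval whose symbolic dynamics Σ(f) has positive topological entropy, then Σ(f) is a subshift of quasi-finite type; indeed h_𝒞(Σ(f)) = 0. -/
open Filter Set MeasureTheory

namespace QFTPaper

variable {A : Type*} {B : Type*}

/-- The left shift on bi-infinite sequences over the alphabet `A`. -/
def shift (x : ℤ → A) : ℤ → A := fun n => x (n + 1)

/-- A subshift: a closed, shift-invariant subset of `A^ℤ`. -/
def IsSubshift [TopologicalSpace A] (X : Set (ℤ → A)) : Prop :=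
  IsClosed X ∧ shift '' X = X

/-- The finite word `w` occurs in `x` at position `k`. -/
def OccursAt (w : List A) (x : ℤ → A) (k : ℤ) : Prop :=
  ∀ i : Fin w.length, x (k + (i : ℕ)) = w.get i

/-- The language of `X`: words of length `n` occurring in elements of `X`
(at position `0`, which is no restriction by shift-invariance). -/
def Lang (X : Set (ℤ → A)) (n : ℕ) : Set (List A) :=
  { w | w.length = n ∧ ∃ x ∈ X, OccursAt w x 0 }

/-- Topological entropy of a subshift. -/
noncomputable def hTop (X : Set (ℤ → A)) : ℝ :=
  limsup (fun n : ℕ => Real.log (Nat.card ↥(Lang X n)) / (n : ℝ)) atTop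

/-- Follower set of the finite word `w = A₋ₙ…A₀` (listed from `A₋ₙ` to `A₀`):
the set of one-sided sequences `B₀B₁B₂…` with `B ∈ X` and `B₋ₙ…B₀ = A₋ₙ…A₀`,
realized by requiring `w` to occur in `B` at positions `0,…,n` and reading off
the tail of `B` starting at the position of the last letter of `w`.
For the empty word this gives `X₊` (by shift-invariance). -/
def fol (X : Set (ℤ → A)) (w : List A) : Set (ℕ → A) :=
  { y | ∃ B ∈ X, (∀ i : Fin w.length, B ((i : ℕ) : ℤ) = w.get i) ∧
        ∀ k : ℕ, y k = B ((w.length : ℤ) - 1 + (k : ℤ)) }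

/-- `w = A₋ₙ…A₀` is a left constraint:
`∅ ≠ fol(A₋ₙ…A₀) ⊊ fol(A₋ₙ₊₁…A₀)`. -/
def IsLeftConstraint (X : Set (ℤ → A)) (w : List A) : Prop :=
  w ≠ [] ∧ fol X w ≠ ∅ ∧ fol X w ⊂ fol X w.tail

/-- `𝒞(X, n)`: the set of left constraints of length `n`. -/
def LC (X : Set (ℤ → A)) (n : ℕ) : Set (List A) :=
  { w | w.length = n ∧ IsLeftConstraint X w }

/-- The left constraint entropy `h_𝒞(X) = limsup (1/n) log⁺ #𝒞(X,n)`. -/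
noncomputable def hC (X : Set (ℤ → A)) : ℝ :=
  limsup (fun n : ℕ => max 0 (Real.log (Nat.card ↥(LC X n))) / (n : ℝ)) atTop

/-- The time-reversed subshift `X̄`. -/
def rev (X : Set (ℤ → A)) : Set (ℤ → A) :=
  (fun x : ℤ → A => fun n : ℤ => x (-n)) '' X

/-- The symmetric constraint entropy `h_𝒮𝒞(X) = min (h_𝒞(X), h_𝒞(X̄))`. -/
noncomputable def hSC (X : Set (ℤ → A)) : ℝ := min (hC X) (hC (rev X))

/-- Subshift of quasi-finite type: `h_𝒮𝒞(X) < h_top(X)`. -/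
def IsQFT [TopologicalSpace A] (X : Set (ℤ → A)) : Prop :=
  IsSubshift X ∧ hSC X < hTop X

/-- The word `B₋ₘ…B₀` read off from a one-sided past `b` (where `b j = B₋ⱼ`). -/
def wordOf (b : ℕ → A) (m : ℕ) : List A :=
  (List.range (m + 1)).map fun j => b (m - j)

/-- An extendable left constraint: a left constraint `A₋ₙ…A₀` which admits a
one-sided past `B` extending it such that `B₋ₘ…B₀` is again a left constraint
for infinitely many `m`. -/
def IsExtendable (X : Set (ℤ → A)) (w : List A) : Prop :=
  IsLeftConstraint X w ∧
  ∃ b : ℕ → A, wordOf b (w.length - 1) = w ∧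
    ∀ N : ℕ, ∃ m, N ≤ m ∧ IsLeftConstraint X (wordOf b m)

/-- `𝒞*(X, n)`: the set of extendable left constraints of length `n`. -/
def ELC (X : Set (ℤ → A)) (n : ℕ) : Set (List A) :=
  { w | w.length = n ∧ IsExtendable X w }

/-- The extendable left constraint entropy `h*_𝒞(X)`. -/
noncomputable def hCstar (X : Set (ℤ → A)) : ℝ :=
  limsup (fun n : ℕ => Real.log (Nat.card ↥(ELC X n)) / (n : ℝ)) atTop

/-- `h*_𝒮𝒞(X) = min (h*_𝒞(X), h*_𝒞(X̄))`. -/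
noncomputable def hSCstar (X : Set (ℤ → A)) : ℝ := min (hCstar X) (hCstar (rev X))

/-- Subshift of weak quasi-finite type: `h*_𝒮𝒞(X) < h_top(X)`. -/
def IsWeakQFT [TopologicalSpace A] (X : Set (ℤ → A)) : Prop :=
  IsSubshift X ∧ hSCstar X < hTop X

/-- Subshift of finite type: defined by excluding a finite set of finite words. -/
def IsSFT (X : Set (ℤ → A)) : Prop :=
  ∃ F : Finset (List A), X = { x | ∀ w ∈ F, ∀ k : ℤ, ¬ OccursAt w x k }

/-- Sofic subshift: the image of an SFT under a continuous shift-commuting map. -/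
def IsSofic [TopologicalSpace A] (X : Set (ℤ → A)) : Prop :=
  ∃ (B : Type) (_ : Fintype B) (Y : Set (ℤ → B)) (π : (ℤ → B) → (ℤ → A)),
    IsSFT Y ∧
    (letI : TopologicalSpace B := ⊥
     Continuous π) ∧
    (∀ x : ℤ → B, π (shift x) = shift (π x)) ∧ π '' Y = X


/-- Topological conjugacy of subshifts: a homeomorphism commuting with the shifts. -/
def Conjugate [TopologicalSpace A] [TopologicalSpace B]
    (X : Set (ℤ → A)) (Y : Set (ℤ → B)) : Prop :=
  ∃ φ : X ≃ₜ Y, ∀ x x' : X, (x' : ℤ → A) = shift (x : ℤ → A) →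
    (φ x' : ℤ → B) = shift (φ x : ℤ → B)

/-- The cylinder of a word of length `n` placed at positions `0,…,n-1`. -/
def cylSet (n : ℕ) (w : Fin n → A) : Set (ℤ → A) :=
  { x | ∀ i : Fin n, x ((i : ℕ) : ℤ) = w i }

/-- Entropy of the partition of `A^ℤ` into cylinders of length `n`. -/
noncomputable def blockEntropy [Fintype A] [MeasurableSpace A]
    (μ : Measure (ℤ → A)) (n : ℕ) : ℝ :=
  ∑ w : Fin n → A, Real.negMulLog ((μ (cylSet n w)).toReal)

/-- Kolmogorov–Sinai entropy of a shift-invariant measure on `A^ℤ`,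
computed with the natural (generating) partition into cylinders. -/
noncomputable def KSEntropy [Fintype A] [MeasurableSpace A]
    (μ : Measure (ℤ → A)) : ℝ :=
  ⨅ n : ℕ, blockEntropy μ (n + 1) / (n + 1)

/-- A maximum measure: an ergodic shift-invariant Borel probability measure
carried by `X` whose Kolmogorov–Sinai entropy equals the topological entropy of `X`. -/
def IsMaxMeasure [Fintype A] [MeasurableSpace A]
    (X : Set (ℤ → A)) (μ : Measure (ℤ → A)) : Prop :=
  IsProbabilityMeasure μ ∧ μ Xᶜ = 0 ∧ Ergodic shift μ ∧ KSEntropy μ = hTop X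

/-- The number of points of `X` fixed by the `n`-th power of the shift. -/
noncomputable def perCount (X : Set (ℤ → A)) (n : ℕ) : ℕ :=
  Nat.card {x : ℤ → A | x ∈ X ∧ shift^[n] x = x}

/-- `f` is piecewise monotonic on the interval `I`: `I` is partitioned into
finitely many subintervals on each of which `f` is continuous and strictly
monotonic. -/
def IsPiecewiseMonotonic (f : ℝ → ℝ) (I : Set ℝ) : Prop :=
  ∃ Q : Finset (Set ℝ),
    (∀ J ∈ Q, J.OrdConnected ∧ ContinuousOn f J ∧
      (StrictMonoOn f J ∨ StrictAntiOn f J)) ∧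
    (Q : Set (Set ℝ)).PairwiseDisjoint id ∧ ⋃₀ (Q : Set (Set ℝ)) = I

/-- `J` is an open interval contained in `I` on which `f` is continuous and
strictly monotonic. -/
def GoodPiece (f : ℝ → ℝ) (I J : Set ℝ) : Prop :=
  (∃ c d : ℝ, J = Set.Ioo c d) ∧ J ⊆ I ∧ ContinuousOn f J ∧
    (StrictMonoOn f J ∨ StrictAntiOn f J)

/-- `P` is the natural partition of the piecewise monotonic map `f` on `I`:
the collection of all maximal open intervals on which `f` is continuous and
strictly monotonic. -/
def IsNaturalPartition (f : ℝ → ℝ) (I : Set ℝ) (P : Finset (Set ℝ)) : Prop :=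
  ∀ J : Set ℝ, J ∈ P ↔
    (J.Nonempty ∧ GoodPiece f I J ∧ ∀ J', GoodPiece f I J' → J ⊆ J' → J' = J)

/-- The symbolic dynamics of `f` with respect to the partition `P`: bi-infinite
`P`-itineraries all of whose geometric cylinders
`⟨Aₙ…Aₙ₊ₖ⟩ = Aₙ ∩ f⁻¹Aₙ₊₁ ∩ … ∩ f⁻ᵏAₙ₊ₖ` are nonempty. -/
def symbolic (f : ℝ → ℝ) (P : Finset (Set ℝ)) : Set (ℤ → {J // J ∈ P}) :=
  { a | ∀ n : ℤ, ∀ k : ℕ,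
      (⋂ j : Fin (k + 1), f^[(j : ℕ)] ⁻¹' ((a (n + (j : ℕ)) : Set ℝ))).Nonempty }

namespace Aux

def sh {A : Type*} (x : ℕ → A) : ℕ → A := fun n => x (n + 1)

def cns {A : Type*} (a : A) (x : ℕ → A) : ℕ → A
  | 0 => a
  | n + 1 => x n

theorem sh_cns {A : Type*} (a : A) (x : ℕ → A) : sh (cns a x) = x := rfl

theorem cns_sh {A : Type*} (x : ℕ → A) : cns (x 0) (sh x) = x := by
  funext n
  cases n <;> rfl

/-- `x` starts with the word `w`. -/
def InC {A : Type*} : List A → (ℕ → A) → Prop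
  | [], _ => True
  | a :: w, x => x 0 = a ∧ InC w (sh x)

theorem InC_eq {A : Type*} {w : List A} : ∀ {x y : ℕ → A}, InC w x → InC w y →
    ∀ i < w.length, x i = y i := by
  induction w with
  | nil => intro x y _ _ i hi; simp at hi
  | cons a w ih =>
    intro x y hx hy i hi
    cases i with
    | zero => rw [hx.1, hy.1]
    | succ i => exact ih hx.2 hy.2 i (by simpa using hi)

theorem InC_diff {A : Type*} {w : List A} : ∀ {w' : List A} {x y : ℕ → A}, InC w x → InC w' y →
    w.length = w'.length → w ≠ w' → ∃ i < w.length, x i ≠ y i := by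
  induction w with
  | nil =>
    intro w' x y _ _ h hne
    exact absurd (List.length_eq_zero_iff.1 h.symm).symm hne
  | cons a w ih =>
    intro w' x y hx hy h hne
    cases w' with
    | nil => simp at h
    | cons b w' =>
      by_cases hab : a = b
      · subst hab
        obtain ⟨i, hi, hd⟩ := ih hx.2 hy.2 (by simpa using h) (by intro h; exact hne (by rw [h]))
        exact ⟨i + 1, by simpa using hi, hd⟩
      · exact ⟨0, by simp, by rw [hx.1, hy.1]; exact hab⟩

theorem InC_take {A : Type*} {w : List A} : ∀ {x : ℕ → A} (k : ℕ), InC w x → InC (w.take k) x := by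
  induction w with
  | nil => intro x k _; simp [InC]
  | cons a w ih =>
    intro x k h
    cases k with
    | zero => simp [InC]
    | succ k => exact ⟨h.1, ih k h.2⟩

structure OrdData {A L : Type*} [LinearOrder L] (τ : (ℕ → A) → L)
    (Ω Λ : Set (ℕ → A)) : Prop where
  inj : Function.Injective τ
  o1 : ∀ n x y x' y', τ x < τ y → (∃ i < n, x i ≠ y i) → (∀ i < n, x i = x' i) →
    (∀ i < n, y i = y' i) → τ x' < τ y'
  o2 : ∀ a : A, (∀ x y : ℕ → A, x 0 = a → y 0 = a → τ x < τ y → τ (sh x) < τ (sh y)) ∨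
    (∀ x y : ℕ → A, x 0 = a → y 0 = a → τ x < τ y → τ (sh y) < τ (sh x))
  conv : ∀ x y η : ℕ → A, x ∈ Ω → y ∈ Ω → x 0 = y 0 → η ∈ Ω → τ (sh x) ≤ τ η → τ η ≤ τ (sh y) →
    cns (x 0) η ∈ Ω
  sub : Λ ⊆ Ω
  shOm : ∀ x ∈ Ω, sh x ∈ Ω
  shLa : ∀ x ∈ Λ, sh x ∈ Λ
  surj : ∀ x ∈ Λ, ∃ y ∈ Λ, sh y = x
  limit : ∀ η : ℕ → A, (∀ m : ℕ, ∃ y ∈ Ω, sh^[m] y = η) → η ∈ Λ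

section counting

theorem ncard_rel {W I : Type*} (S : Set W) (T : Set I) (hT : T.Finite) (P : W → I → Prop)
    (h1 : ∀ w ∈ S, ∃ i ∈ T, P w i)
    (h2 : ∀ w ∈ S, ∀ w' ∈ S, ∀ i, P w i → P w' i → w = w') : S.ncard ≤ T.ncard := by
  classical
  rcases S.eq_empty_or_nonempty with rfl | ⟨w0, hw0⟩
  · simp
  obtain ⟨i0, _⟩ := h1 w0 hw0
  have : Nonempty I := ⟨i0⟩
  choose! g hg using h1
  refine Set.ncard_le_ncard_of_injOn g (fun w hw => (hg w hw).1) ?_ hT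
  intro w hw w' hw' h
  exact h2 w hw w' hw' (g w) (hg w hw).2 (h ▸ (hg w' hw').2)

theorem bad_card {X Y : Type*} [Finite X] [Finite Y] (φ : X → Y) (hφ : Function.Surjective φ) (p : ℕ)
    (h : Nat.card X ≤ Nat.card Y + p) : {x : X | ∃ x', x' ≠ x ∧ φ x' = φ x}.ncard ≤ 2 * p := by
  classical
  set g := Function.surjInv hφ with hg
  have hgφ : ∀ y, φ (g y) = y := Function.surjInv_eq hφ
  set R : Set X := (Set.range g)ᶜ with hR
  have hRc : R.ncard ≤ p := by
    have h1 := Set.ncard_add_ncard_compl (Set.range g)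
    have h2 : (Set.range g).ncard = Nat.card Y := by
      rw [← Set.image_univ, Set.ncard_image_of_injective _ (Function.injective_surjInv hφ),
        Set.ncard_univ]
    rw [hR]
    omega
  have hsub : {x : X | ∃ x', x' ≠ x ∧ φ x' = φ x} ⊆ R ∪ (fun x => g (φ x)) '' R := by
    rintro x ⟨x', hne, he⟩
    by_cases hx : x ∈ Set.range g
    · right
      obtain ⟨y, rfl⟩ := hx
      rw [hgφ] at he
      refine ⟨x', ?_, by simp [he]⟩
      rintro ⟨y', rfl⟩
      rw [hgφ] at he
      exact hne (by rw [he])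
    · left; exact hx
  calc _ ≤ (R ∪ (fun x => g (φ x)) '' R).ncard := Set.ncard_le_ncard hsub (Set.toFinite _)
    _ ≤ R.ncard + ((fun x => g (φ x)) '' R).ncard := Set.ncard_union_le _ _
    _ ≤ R.ncard + R.ncard := Nat.add_le_add_left (Set.ncard_image_le (Set.toFinite _)) _
    _ ≤ 2 * p := by omega

end counting

section main

variable {A L : Type*} [LinearOrder L] {τ : (ℕ → A) → L} {Ω Λ : Set (ℕ → A)}

def Erel (τ : (ℕ → A) → L) (Λ : Set (ℕ → A)) : ℕ → Λ → Λ → Prop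
  | 0 => fun _ _ => True
  | m + 1 => fun x y => ∀ W : Set (ℕ → A),
      (∀ s ∈ Λ, ∀ t ∈ Λ, τ s ≤ τ t → t ∈ W → s ∈ W) →
      (∀ s t : Λ, Erel τ Λ m s t → s.1 0 = t.1 0 → (sh s.1 ∈ W ↔ sh t.1 ∈ W)) →
      (x.1 ∈ W ↔ y.1 ∈ W)

theorem Erel_equiv (m : ℕ) : Equivalence (Erel τ Λ m) := by
  cases m with
  | zero => exact ⟨fun _ => trivial, fun _ => trivial, fun _ _ => trivial⟩
  | succ m =>
    exact ⟨fun _ _ _ _ => Iff.rfl, fun h W h1 h2 => (h W h1 h2).symm,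
      fun h h' W h1 h2 => (h W h1 h2).trans (h' W h1 h2)⟩

theorem Erel_conv (m : ℕ) (x z y : Λ) (h : Erel τ Λ m x y) (hxz : τ x.1 ≤ τ z.1)
    (hzy : τ z.1 ≤ τ y.1) : Erel τ Λ m x z := by
  cases m with
  | zero => trivial
  | succ m =>
    intro W h1 h2
    constructor
    · intro hx; exact h1 _ z.2 _ y.2 hzy ((h W h1 h2).1 hx)
    · intro hz; exact h1 _ x.2 _ z.2 hxz hz

theorem Erel_succ_le (m : ℕ) : ∀ x y : Λ, Erel τ Λ (m + 1) x y → Erel τ Λ m x y := by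
  induction m with
  | zero => intro x y _; trivial
  | succ m ih =>
    intro x y h W h1 h2
    exact h W h1 (fun s t hst h0 => h2 s t (ih s t hst) h0)

theorem Erel_anti {m k : ℕ} (hmk : m ≤ k) : ∀ x y : Λ, Erel τ Λ k x y → Erel τ Λ m x y := by
  induction hmk with
  | refl => exact fun _ _ h => h
  | step _ ih => exact fun x y h => ih x y (Erel_succ_le _ x y h)

def Es (τ : (ℕ → A) → L) (Λ : Set (ℕ → A)) (m : ℕ) : Setoid Λ := ⟨Erel τ Λ m, Erel_equiv m⟩

def Fs (τ : (ℕ → A) → L) (Λ : Set (ℕ → A)) (m : ℕ) : Setoid Λ :=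
  ⟨fun x y => Erel τ Λ m x y ∧ x.1 0 = y.1 0,
    ⟨fun x => ⟨(Erel_equiv m).refl x, rfl⟩, fun h => ⟨(Erel_equiv m).symm h.1, h.2.symm⟩,
     fun h h' => ⟨(Erel_equiv m).trans h.1 h'.1, h.2.trans h'.2⟩⟩⟩

abbrev QE (τ : (ℕ → A) → L) (Λ : Set (ℕ → A)) (m : ℕ) := Quotient (Es τ Λ m)
abbrev QF (τ : (ℕ → A) → L) (Λ : Set (ℕ → A)) (m : ℕ) := Quotient (Fs τ Λ m)

def shS (H : OrdData τ Ω Λ) (x : Λ) : Λ := ⟨sh x.1, H.shLa x.1 x.2⟩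

theorem Erel_shS (H : OrdData τ Ω Λ) {m : ℕ} {x y : Λ} (h : Erel τ Λ m x y) (h0 : x.1 0 = y.1 0) :
    Erel τ Λ (m + 1) (shS H x) (shS H y) := by
  intro W _ h2
  exact h2 x y h h0

def phi (H : OrdData τ Ω Λ) (m : ℕ) : QF τ Λ m → QE τ Λ (m + 1) :=
  Quotient.lift (fun x => (Quotient.mk (Es τ Λ (m + 1)) (shS H x)))
    (fun _ _ h => Quotient.sound (Erel_shS H h.1 h.2))

theorem phi_surj (H : OrdData τ Ω Λ) (m : ℕ) : Function.Surjective (phi H m) := by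
  intro q
  induction q using Quotient.inductionOn with
  | h x =>
    obtain ⟨y, hy, hyx⟩ := H.surj x.1 x.2
    refine ⟨Quotient.mk _ ⟨y, hy⟩, ?_⟩
    change Quotient.mk (Es τ Λ (m + 1)) (shS H ⟨y, hy⟩) = Quotient.mk _ x
    congr 1
    exact Subtype.ext hyx

theorem fin_QF [Finite A] (m : ℕ) [Finite (QE τ Λ m)] : Finite (QF τ Λ m) := by
  let g : QF τ Λ m → QE τ Λ m × A := Quotient.lift
    (fun x => ((Quotient.mk (Es τ Λ m) x), x.1 0))
    (fun x y h => Prod.ext (Quotient.sound h.1) h.2)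
  refine Finite.of_injective g ?_
  intro q q'
  induction q using Quotient.inductionOn with
  | h x =>
  induction q' using Quotient.inductionOn with
  | h y =>
    intro h
    have h1 := congrArg Prod.fst h
    have h2 := congrArg Prod.snd h
    exact Quotient.sound ⟨Quotient.exact h1, h2⟩

theorem fin_QE [Finite A] (H : OrdData τ Ω Λ) (m : ℕ) : Finite (QE τ Λ m) := by
  induction m with
  | zero =>
    have : Subsingleton (QE τ Λ 0) := ⟨fun q q' => by
      induction q using Quotient.inductionOn with
      | h x =>
      induction q' using Quotient.inductionOn with
      | h y => exact Quotient.sound (s := Es τ Λ 0) trivial⟩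
    infer_instance
  | succ m ih =>
    have := fin_QF (τ := τ) (Λ := Λ) m
    exact Finite.of_surjective _ (phi_surj H m)

theorem card_QE_mono [Finite A] (H : OrdData τ Ω Λ) (m : ℕ) :
    Nat.card (QE τ Λ m) ≤ Nat.card (QE τ Λ (m + 1)) := by
  have := fin_QE H (m + 1)
  refine Nat.card_le_card_of_surjective (Quotient.lift (fun x => Quotient.mk (Es τ Λ m) x)
    (fun x y h => Quotient.sound (Erel_succ_le m x y h)) : QE τ Λ (m+1) → QE τ Λ m) ?_
  intro q
  induction q using Quotient.inductionOn with
  | h x => exact ⟨Quotient.mk _ x, rfl⟩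

/-- letters of points are weakly ordered -/
theorem letter_conv (H : OrdData τ Ω Λ) {x z y : ℕ → A} (h1 : τ x ≤ τ z) (h2 : τ z ≤ τ y)
    (h : x 0 = y 0) : x 0 = z 0 := by
  by_contra hne
  have hxz : τ x < τ z := lt_of_le_of_ne h1 (fun he => hne (by rw [H.inj he]))
  have hxz' := H.o1 1 x z y z hxz ⟨0, by simp, hne⟩ (by intro i hi; interval_cases i; exact h)
    (fun _ _ => rfl)
  exact absurd h2 (not_le.2 hxz')

theorem rank_lemma (r : Setoid Λ) [Finite (Quotient r)]
    (hc : ∀ x z y : Λ, r x y → τ x.1 ≤ τ z.1 → τ z.1 ≤ τ y.1 → r x z) :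
    ∃ ρ : Λ → ℕ, (∀ x, ρ x < Nat.card (Quotient r)) ∧
      (∀ x y : Λ, τ x.1 ≤ τ y.1 → ρ x ≤ ρ y) ∧
      (∀ x y : Λ, τ x.1 ≤ τ y.1 → ¬ r x y → ρ x < ρ y) ∧ ∀ x y, r x y → ρ x = ρ y := by
  let T : Λ → Set (Quotient r) := fun x => {q | ∃ y : Λ, q = Quotient.mk r y ∧ τ y.1 < τ x.1 ∧ ¬ r y x}
  have hself : ∀ x : Λ, Quotient.mk r x ∉ T x := by
    rintro x ⟨y, hy, _, hr⟩
    exact hr (r.symm (Quotient.exact hy))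
  have hmono : ∀ x y : Λ, τ x.1 ≤ τ y.1 → T x ⊆ T y := by
    rintro x y hxy q ⟨z, rfl, hzx, hr⟩
    exact ⟨z, rfl, hzx.trans_le hxy, fun h => hr (hc z x y h hzx.le hxy)⟩
  have hstrict : ∀ x y : Λ, τ x.1 ≤ τ y.1 → ¬ r x y → (T x).ncard < (T y).ncard := by
    intro x y hxy hr
    refine Set.ncard_lt_ncard ⟨hmono x y hxy, fun h => hself x (h ⟨x, rfl, ?_, hr⟩)⟩ (Set.toFinite _)
    refine lt_of_le_of_ne hxy (fun he => hr ?_)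
    exact hc x y x (r.refl x) hxy he.ge
  have heq : ∀ x y : Λ, τ x.1 ≤ τ y.1 → r x y → (T y) ⊆ (T x) := by
    rintro x y hxy hr q ⟨z, rfl, hzx, hr'⟩
    refine ⟨z, rfl, ?_, fun h => hr' (r.trans h hr)⟩
    by_contra hcon
    push Not at hcon
    exact hr' (r.trans (r.symm (hc x z y hr hcon hzx.le)) hr)
  refine ⟨fun x => (T x).ncard, ?_, ?_, hstrict, ?_⟩
  · intro x
    rw [← Set.ncard_univ]
    exact Set.ncard_lt_ncard ⟨Set.subset_univ _, fun h => hself x (h (Set.mem_univ _))⟩ (Set.toFinite _)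
  · intro x y h
    exact Set.ncard_le_ncard (hmono x y h) (Set.toFinite _)
  · intro x y h
    rcases le_total (τ x.1) (τ y.1) with hxy | hxy
    · exact le_antisymm (Set.ncard_le_ncard (hmono x y hxy) (Set.toFinite _))
        (Set.ncard_le_ncard (heq x y hxy h) (Set.toFinite _))
    · exact le_antisymm (Set.ncard_le_ncard (heq y x hxy (r.symm h)) (Set.toFinite _))
        (Set.ncard_le_ncard (hmono y x hxy) (Set.toFinite _))

def Ls (Λ : Set (ℕ → A)) : Setoid Λ :=
  ⟨fun x y => x.1 0 = y.1 0, ⟨fun _ => rfl, fun h => h.symm, fun h h' => h.trans h'⟩⟩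

theorem card_QF [Finite A] (H : OrdData τ Ω Λ) (m : ℕ) :
    Nat.card (QF τ Λ m) ≤ Nat.card (QE τ Λ m) + Nat.card A := by
  have := fin_QE H m
  have hinj : Function.Injective (Quotient.lift (fun x : Λ => x.1 0) (fun _ _ h => h) :
      Quotient (Ls Λ) → A) := by
    intro q q'
    induction q using Quotient.inductionOn with
    | h x =>
    induction q' using Quotient.inductionOn with
    | h y => exact fun h => Quotient.sound (s := Ls Λ) h
  have : Finite (Quotient (Ls Λ)) := Finite.of_injective _ hinj
  have hcard : Nat.card (Quotient (Ls Λ)) ≤ Nat.card A := Nat.card_le_card_of_injective _ hinj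
  obtain ⟨ρ, hρ1, hρ2, hρ3, hρ4⟩ := rank_lemma (τ := τ) (Es τ Λ m)
    (fun x z y h h1 h2 => Erel_conv m x z y h h1 h2)
  obtain ⟨κ, hκ1, hκ2, hκ3, hκ4⟩ := rank_lemma (τ := τ) (Ls Λ)
    (fun x z y h h1 h2 => letter_conv H h1 h2 h)
  let g : QF τ Λ m → Fin (Nat.card (QE τ Λ m) + Nat.card A) := Quotient.lift
    (fun x => ⟨ρ x + κ x, by
      have h1 : ρ x < Nat.card (QE τ Λ m) := hρ1 x
      have := hκ1 x
      omega⟩)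
    (fun x y h => by
      apply Fin.ext
      change ρ x + κ x = ρ y + κ y
      rw [hρ4 x y h.1, hκ4 x y h.2])
  have key : ∀ x y : Λ, τ x.1 ≤ τ y.1 → ρ x + κ x = ρ y + κ y → (Fs τ Λ m) x y := by
    intro x y hxy h
    have h1 := hρ2 x y hxy
    have h2 := hκ2 x y hxy
    constructor
    · by_contra hne
      have := hρ3 x y hxy hne
      omega
    · by_contra hne
      have := hκ3 x y hxy hne
      omega
  have hg : Function.Injective g := by
    intro q q'
    induction q using Quotient.inductionOn with
    | h x =>
    induction q' using Quotient.inductionOn with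
    | h y =>
      intro h
      have h' : ρ x + κ x = ρ y + κ y := congrArg Fin.val h
      rcases le_total (τ x.1) (τ y.1) with hxy | hxy
      · exact Quotient.sound (key x y hxy h')
      · exact Quotient.sound ((Fs τ Λ m).symm (key y x hxy h'.symm))
  simpa using Nat.card_le_card_of_injective g hg

def BadF (H : OrdData τ Ω Λ) (m : ℕ) : Set (QF τ Λ m) := {q | ∃ q', q' ≠ q ∧ phi H m q' = phi H m q}
def BadE (H : OrdData τ Ω Λ) (m : ℕ) : Set (QE τ Λ (m + 1)) := phi H m '' BadF H m

theorem BadF_card [Finite A] (H : OrdData τ Ω Λ) (m : ℕ) : (BadF H m).ncard ≤ 2 * Nat.card A := by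
  have := fin_QE H m
  have := fin_QE H (m + 1)
  have := fin_QF (τ := τ) (Λ := Λ) m
  refine bad_card (phi H m) (phi_surj H m) _ ((card_QF H m).trans ?_)
  have := card_QE_mono H m
  omega

theorem BadE_card [Finite A] (H : OrdData τ Ω Λ) (m : ℕ) : (BadE H m).ncard ≤ 2 * Nat.card A := by
  have := fin_QE H m
  have := fin_QF (τ := τ) (Λ := Λ) m
  exact (Set.ncard_image_le (Set.toFinite _)).trans (BadF_card H m)

end main

section main2

variable {A L : Type*} [LinearOrder L] {τ : (ℕ → A) → L} {Ω Λ : Set (ℕ → A)}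

/-- `η` lies in the order hull of the `Erel m` class of `z`. -/
def Hul (τ : (ℕ → A) → L) (Λ : Set (ℕ → A)) (m : ℕ) (z : Λ) (η : ℕ → A) : Prop :=
  ∃ s t : Λ, Erel τ Λ m s z ∧ Erel τ Λ m t z ∧ τ s.1 ≤ τ η ∧ τ η ≤ τ t.1

/-- `η` is beyond all points of `K`, on the side given by `d`. -/
def Beyond (τ : (ℕ → A) → L) (d : Bool) (K : Set (ℕ → A)) (η : ℕ → A) : Prop :=
  (d = true ∧ ∀ k ∈ K, τ k < τ η) ∨ (d = false ∧ ∀ k ∈ K, τ η < τ k)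

theorem Beyond_mono {d : Bool} {K K' : Set (ℕ → A)} {η : ℕ → A} (h : K' ⊆ K)
    (hb : Beyond τ d K η) : Beyond τ d K' η := by
  rcases hb with ⟨h1, h2⟩ | ⟨h1, h2⟩
  · exact Or.inl ⟨h1, fun k hk => h2 k (h hk)⟩
  · exact Or.inr ⟨h1, fun k hk => h2 k (h hk)⟩

theorem exists_beyond {K : Set (ℕ → A)} {η : ℕ → A}
    (h : ¬ ∃ s ∈ K, ∃ t ∈ K, τ s ≤ τ η ∧ τ η ≤ τ t) : ∃ d, Beyond τ d K η := by
  by_cases hs : ∃ s ∈ K, τ s ≤ τ η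
  · obtain ⟨s, hs, hsη⟩ := hs
    refine ⟨true, Or.inl ⟨rfl, fun k hk => ?_⟩⟩
    by_contra hc
    exact h ⟨s, hs, k, hk, hsη, not_lt.1 hc⟩
  · refine ⟨false, Or.inr ⟨rfl, fun k hk => ?_⟩⟩
    by_contra hc
    exact hs ⟨k, hk, not_lt.1 hc⟩

/-- the class of `z` as a set of sequences -/
def cls (τ : (ℕ → A) → L) (Λ : Set (ℕ → A)) (m : ℕ) (z : Λ) : Set (ℕ → A) :=
  {k | ∃ s : Λ, s.1 = k ∧ Erel τ Λ m s z}

theorem not_Hul {m : ℕ} {z : Λ} {η : ℕ → A} (h : ¬ Hul τ Λ m z η) :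
    ∃ d, Beyond τ d (cls τ Λ m z) η := by
  apply exists_beyond
  rintro ⟨_, ⟨s, rfl, hs⟩, _, ⟨t, rfl, ht⟩, h1, h2⟩
  exact h ⟨s, t, hs, ht, h1, h2⟩

theorem Hul_rel {m : ℕ} {z z' : Λ} {η : ℕ → A} (h : Erel τ Λ m z z') (hh : Hul τ Λ m z η) :
    Hul τ Λ m z' η := by
  obtain ⟨s, t, hs, ht, h1, h2⟩ := hh
  exact ⟨s, t, (Erel_equiv m).trans hs h, (Erel_equiv m).trans ht h, h1, h2⟩

theorem Hul_anti {m k : ℕ} (hmk : m ≤ k) {z : Λ} {η : ℕ → A} (hh : Hul τ Λ k z η) :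
    Hul τ Λ m z η := by
  obtain ⟨s, t, hs, ht, h1, h2⟩ := hh
  exact ⟨s, t, Erel_anti hmk _ _ hs, Erel_anti hmk _ _ ht, h1, h2⟩

theorem Hul_mem {m : ℕ} {z y : Λ} (hh : Hul τ Λ m z y.1) : Erel τ Λ m y z := by
  obtain ⟨s, t, hs, ht, h1, h2⟩ := hh
  have := Erel_conv m s y t ((Erel_equiv m).trans hs ((Erel_equiv m).symm ht)) h1 h2
  exact (Erel_equiv m).trans ((Erel_equiv m).symm this) hs

def Uncut (τ : (ℕ → A) → L) (Ω Λ : Set (ℕ → A)) (m : ℕ) (w : List A) : Prop :=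
  ∃ z : Λ, ∀ η ∈ Ω, InC w η → Hul τ Λ m z η

theorem Uncut_anti {m k : ℕ} (hmk : m ≤ k) {w : List A} (h : Uncut τ Ω Λ k w) :
    Uncut τ Ω Λ m w := by
  obtain ⟨z, hz⟩ := h
  exact ⟨z, fun η h1 h2 => Hul_anti hmk (hz η h1 h2)⟩

theorem Uncut_of (H : OrdData τ Ω Λ) {m : ℕ} {w : List A} (h : Uncut τ Ω Λ m w) {z : Λ}
    (hz : InC w z.1) {η : ℕ → A} (hη : η ∈ Ω) (hw : InC w η) : Hul τ Λ m z η := by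
  obtain ⟨z0, h0⟩ := h
  have := Hul_mem (h0 z.1 (H.sub z.2) hz)
  exact Hul_rel ((Erel_equiv m).symm this) (h0 η hη hw)

theorem not_Uncut {m : ℕ} {w : List A} (h : ¬ Uncut τ Ω Λ m w) (z : Λ) :
    ∃ η ∈ Ω, InC w η ∧ ¬ Hul τ Λ m z η := by
  by_contra hc
  push Not at hc
  exact h ⟨z, hc⟩

def LangW (Λ : Set (ℕ → A)) (w : List A) : Prop := ∃ z : Λ, InC w z.1

def Gap (τ : (ℕ → A) → L) (Ω Λ : Set (ℕ → A)) (w : List A) : Prop :=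
  LangW Λ w ∧ ∃ m, ¬ Uncut τ Ω Λ m w

theorem LangW_tail (H : OrdData τ Ω Λ) {w : List A} (h : LangW Λ w) : LangW Λ w.tail := by
  cases w with
  | nil => exact h
  | cons a w =>
    obtain ⟨z, hz⟩ := h
    exact ⟨shS H z, hz.2⟩

theorem LangW_drop (H : OrdData τ Ω Λ) {w : List A} (h : LangW Λ w) (i : ℕ) :
    LangW Λ (w.drop i) := by
  induction i with
  | zero => simpa using h
  | succ i ih =>
    have := LangW_tail H ih
    rwa [List.tail_drop] at this

theorem Gap_take {w : List A} (h : Gap τ Ω Λ w) (k : ℕ) : Gap τ Ω Λ (w.take k) := by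
  obtain ⟨⟨z, hz⟩, m, hm⟩ := h
  refine ⟨⟨z, InC_take k hz⟩, m, fun hu => hm ?_⟩
  obtain ⟨z', hz'⟩ := hu
  exact ⟨z', fun η h1 h2 => hz' η h1 (InC_take k h2)⟩

theorem unique_cut (H : OrdData τ Ω Λ) {K : Set (ℕ → A)} {d : Bool} {w1 w2 : List A}
    (hl : w1.length = w2.length) {z1 z2 η1 η2 : ℕ → A} (hz1 : z1 ∈ K) (hz2 : z2 ∈ K)
    (h1 : InC w1 z1) (h2 : InC w2 z2) (h1' : InC w1 η1) (h2' : InC w2 η2)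
    (hb1 : Beyond τ d K η1) (hb2 : Beyond τ d K η2) : w1 = w2 := by
  by_contra hne
  rcases hb1 with ⟨hd, hb1⟩ | ⟨hd, hb1⟩
  · rcases hb2 with ⟨-, hb2⟩ | ⟨hd', hb2⟩
    · have := H.o1 w1.length z1 η2 η1 z2 (hb2 z1 hz1) (InC_diff h1 h2' hl hne)
        (InC_eq h1 h1') (fun i hi => InC_eq h2' h2 i (hl ▸ hi))
      exact absurd this (hb1 z2 hz2).asymm
    · rw [hd] at hd'; cases hd'
  · rcases hb2 with ⟨hd', hb2⟩ | ⟨-, hb2⟩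
    · rw [hd] at hd'; cases hd'
    · have := H.o1 w1.length η1 z2 z1 η2 (hb1 z2 hz2) (InC_diff h1' h2 hl hne)
        (InC_eq h1' h1) (fun i hi => InC_eq h2 h2' i (hl ▸ hi))
      exact absurd this (hb2 z1 hz1).asymm

theorem count_cut (H : OrdData τ Ω Λ) {ι : Type*} (K : ι → Set (ℕ → A)) (T : Set ι)
    (hT : T.Finite) (n : ℕ) (S : Set (List A)) (hS : ∀ w ∈ S, w.length = n ∧
      ∃ i ∈ T, ∃ d, ∃ z ∈ K i, ∃ η, InC w z ∧ InC w η ∧ Beyond τ d (K i) η) :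
    S.ncard ≤ 2 * T.ncard := by
  have := ncard_rel S (T ×ˢ (Set.univ : Set Bool)) (hT.prod (Set.toFinite _))
    (fun w j => ∃ z ∈ K j.1, ∃ η, InC w z ∧ InC w η ∧ Beyond τ j.2 (K j.1) η) ?_ ?_
  · rw [Set.ncard_prod, Set.ncard_univ] at this
    simp at this
    omega
  · intro w hw
    obtain ⟨_, i, hi, d, h⟩ := hS w hw
    exact ⟨(i, d), ⟨hi, trivial⟩, h⟩
  · rintro w hw w' hw' ⟨i, d⟩ ⟨z, hz, η, h1, h2, h3⟩ ⟨z', hz', η', h1', h2', h3'⟩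
    exact unique_cut H ((hS w hw).1.trans (hS w' hw').1.symm) hz hz' h1 h1' h2 h2' h3 h3'

def KE (τ : (ℕ → A) → L) (Λ : Set (ℕ → A)) (m : ℕ) (q : QE τ Λ m) : Set (ℕ → A) :=
  {k | ∃ s : Λ, s.1 = k ∧ Quotient.mk (Es τ Λ m) s = q}

def KF (τ : (ℕ → A) → L) (Λ : Set (ℕ → A)) (m : ℕ) (q : QF τ Λ m) : Set (ℕ → A) :=
  {k | ∃ s : Λ, s.1 = k ∧ Quotient.mk (Fs τ Λ m) s = q}

theorem KE_sub {m : ℕ} {z : Λ} : KE τ Λ m (Quotient.mk (Es τ Λ m) z) ⊆ cls τ Λ m z := by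
  rintro _ ⟨s, rfl, hs⟩
  exact ⟨s, rfl, Quotient.exact hs⟩

theorem KF_sub {m : ℕ} {z : Λ} : KF τ Λ m (Quotient.mk (Fs τ Λ m) z) ⊆ cls τ Λ m z := by
  rintro _ ⟨s, rfl, hs⟩
  have : (Fs τ Λ m) s z := Quotient.exact hs
  exact ⟨s, rfl, this.1⟩

theorem cut_count [Finite A] (H : OrdData τ Ω Λ) (m n : ℕ) :
    {w : List A | w.length = n ∧ LangW Λ w ∧ ¬ Uncut τ Ω Λ m w}.ncard ≤
      2 * Nat.card (QE τ Λ m) := by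
  have := fin_QE H m
  rw [← Set.ncard_univ]
  refine count_cut H (KE τ Λ m) Set.univ (Set.toFinite _) n _ ?_
  rintro w ⟨hl, ⟨z, hz⟩, hu⟩
  obtain ⟨η, hη, hwη, hn⟩ := not_Uncut hu z
  obtain ⟨d, hd⟩ := not_Hul hn
  exact ⟨hl, Quotient.mk _ z, trivial, d, z.1, ⟨z, rfl, rfl⟩, η, hz, hwη, Beyond_mono KE_sub hd⟩

def WBad (H : OrdData τ Ω Λ) (m : ℕ) (w : List A) : Prop :=
  ∃ z : Λ, InC w z.1 ∧ Quotient.mk (Es τ Λ (m + 1)) z ∈ BadE H m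

theorem U_count [Finite A] (H : OrdData τ Ω Λ) (m n : ℕ) :
    {w : List A | w.length = n ∧ ¬ Uncut τ Ω Λ (m + 1) w ∧ WBad H m w}.ncard ≤
      4 * Nat.card A := by
  have := fin_QE H (m + 1)
  have h1 : _ ≤ 2 * (BadE H m).ncard := count_cut H (KE τ Λ (m + 1)) (BadE H m) (Set.toFinite _) n
    {w : List A | w.length = n ∧ ¬ Uncut τ Ω Λ (m + 1) w ∧ WBad H m w} ?_
  · have := BadE_card H m
    omega
  rintro w ⟨hl, hu, z, hz, hb⟩
  obtain ⟨η, hη, hwη, hn⟩ := not_Uncut hu z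
  obtain ⟨d, hd⟩ := not_Hul hn
  exact ⟨hl, Quotient.mk _ z, hb, d, z.1, ⟨z, rfl, rfl⟩, η, hz, hwη, Beyond_mono KE_sub hd⟩

theorem lemC (H : OrdData τ Ω Λ) {m : ℕ} {w : List A} {a b : A} (hu : Uncut τ Ω Λ (m + 1) w)
    (ha : LangW Λ (a :: w)) (hb : LangW Λ (b :: w)) (hab : a ≠ b) : WBad H m w := by
  obtain ⟨za, hza, hza'⟩ := ha
  obtain ⟨zb, hzb, hzb'⟩ := hb
  have hh : Hul τ Λ (m + 1) (shS H zb) (shS H za).1 :=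
    Uncut_of H hu (z := shS H zb) hzb' (H.sub (shS H za).2) hza'
  have hE := Hul_mem hh
  refine ⟨shS H zb, hzb', Quotient.mk _ zb, ⟨Quotient.mk _ za, ?_, ?_⟩, rfl⟩
  · intro he
    have : (Fs τ Λ m) za zb := Quotient.exact he
    exact hab (by rw [← hza, ← hzb]; exact this.2)
  · exact Quotient.sound hE

theorem cns_between (H : OrdData τ Ω Λ) {s t η : ℕ → A} (hs : s ∈ Ω) (ht : t ∈ Ω)
    (h0 : s 0 = t 0) (hη : η ∈ Ω) (h1 : τ (sh s) ≤ τ η) (h2 : τ η ≤ τ (sh t)) :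
    cns (s 0) η ∈ Ω ∧ ((τ s ≤ τ (cns (s 0) η) ∧ τ (cns (s 0) η) ≤ τ t) ∨
      (τ t ≤ τ (cns (s 0) η) ∧ τ (cns (s 0) η) ≤ τ s)) := by
  refine ⟨H.conv s t η hs ht h0 hη h1 h2, ?_⟩
  rcases H.o2 (s 0) with ho | ho
  · left
    constructor
    · by_contra hc
      exact absurd (ho (cns (s 0) η) s rfl rfl (not_le.1 hc)) (not_lt.2 h1)
    · by_contra hc
      exact absurd (ho t (cns (s 0) η) h0.symm rfl (not_le.1 hc)) (not_lt.2 h2)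
  · right
    constructor
    · by_contra hc
      exact absurd (ho (cns (s 0) η) t rfl h0.symm (not_le.1 hc)) (not_lt.2 h2)
    · by_contra hc
      exact absurd (ho s (cns (s 0) η) rfl rfl (not_le.1 hc)) (not_lt.2 h1)

theorem good_block (H : OrdData τ Ω Λ) {m : ℕ} {x : Λ}
    (hx : Quotient.mk (Fs τ Λ m) x ∉ BadF H m) {η : ℕ → A} (hη : η ∈ Ω)
    (hh : Hul τ Λ (m + 1) (shS H x) η) : Hul τ Λ m x (cns (x.1 0) η) := by
  obtain ⟨s, t, hs, ht, h1, h2⟩ := hh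
  have key : ∀ s : Λ, Erel τ Λ (m + 1) s (shS H x) →
      ∃ s' : Λ, sh s'.1 = s.1 ∧ (Fs τ Λ m) s' x := by
    intro s hs
    obtain ⟨s', hs', he⟩ := H.surj s.1 s.2
    refine ⟨⟨s', hs'⟩, he, ?_⟩
    have hph : phi H m (Quotient.mk (Fs τ Λ m) ⟨s', hs'⟩) = phi H m (Quotient.mk _ x) := by
      have : shS H ⟨s', hs'⟩ = s := Subtype.ext he
      change Quotient.mk _ (shS H ⟨s', hs'⟩) = Quotient.mk _ (shS H x)
      rw [this]
      exact Quotient.sound hs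
    by_contra hne
    exact hx ⟨_, fun he => hne (Quotient.exact he), hph⟩
  obtain ⟨s', hs', hsx⟩ := key s hs
  obtain ⟨t', ht', htx⟩ := key t ht
  have := cns_between H (H.sub s'.2) (H.sub t'.2) (hsx.2.trans htx.2.symm) hη (hs' ▸ h1) (ht' ▸ h2)
  rw [hsx.2] at this
  rcases this.2 with h | h
  · exact ⟨s', t', hsx.1, htx.1, h.1, h.2⟩
  · exact ⟨t', s', htx.1, hsx.1, h.1, h.2⟩

theorem exists_level [Finite A] (n : ℕ) : ∃ M, ∀ w : List A, w.length = n → Gap τ Ω Λ w →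
    ∀ k, M ≤ k → ¬ Uncut τ Ω Λ k w := by
  have hfin : {w : List A | w.length = n ∧ Gap τ Ω Λ w}.Finite :=
    (List.finite_length_eq A n).subset (fun w h => h.1)
  choose! g hg using (fun (w : List A) (h : Gap τ Ω Λ w) => h.2)
  obtain ⟨M, hM⟩ := (hfin.image g).bddAbove
  refine ⟨M, fun w hl hw k hk hu => hg w hw (Uncut_anti ?_ hu)⟩
  exact (hM ⟨w, ⟨hl, hw⟩, rfl⟩).trans hk

theorem lemB [Finite A] (H : OrdData τ Ω Λ) (n : ℕ) :
    {w : List A | w.length = n + 1 ∧ Gap τ Ω Λ w ∧ ¬ Gap τ Ω Λ w.tail}.ncard ≤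
      4 * Nat.card A := by
  obtain ⟨M, hM⟩ := exists_level (A := A) (τ := τ) (Ω := Ω) (Λ := Λ) (n + 1)
  have := fin_QE H M
  have := fin_QF (τ := τ) (Λ := Λ) M
  have h1 : _ ≤ 2 * (BadF H M).ncard := count_cut H (KF τ Λ M) (BadF H M) (Set.toFinite _) (n + 1)
    {w : List A | w.length = n + 1 ∧ Gap τ Ω Λ w ∧ ¬ Gap τ Ω Λ w.tail} ?_
  · have := BadF_card H M
    omega
  rintro w ⟨hl, hg, hng⟩
  have hcut := hM w hl hg M le_rfl
  obtain ⟨z, hz⟩ := hg.1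
  have hu : Uncut τ Ω Λ (M + 1) w.tail := by
    by_contra hc
    exact hng ⟨LangW_tail H hg.1, _, hc⟩
  obtain ⟨η, hη, hwη, hn⟩ := not_Uncut hcut z
  obtain ⟨d, hd⟩ := not_Hul hn
  refine ⟨hl, Quotient.mk _ z, ?_, d, z.1, ⟨z, rfl, rfl⟩, η, hz, hwη, Beyond_mono KF_sub hd⟩
  by_contra hbad
  apply hn
  cases w with
  | nil => simp at hl
  | cons a w =>
    have := good_block H hbad (H.shOm η hη)
      (Uncut_of H hu (z := shS H z) hz.2 (H.shOm η hη) hwη.2)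
    have he : z.1 0 = η 0 := by rw [hz.1, hwη.1]
    rwa [he, cns_sh] at this

theorem surj_iter (H : OrdData τ Ω Λ) (m : ℕ) : ∀ x ∈ Λ, ∃ y ∈ Λ, sh^[m] y = x := by
  induction m with
  | zero => exact fun x hx => ⟨x, hx, rfl⟩
  | succ m ih =>
    intro x hx
    obtain ⟨y, hy, rfl⟩ := H.surj x hx
    obtain ⟨z, hz, rfl⟩ := ih y hy
    exact ⟨z, hz, Function.iterate_succ_apply' _ _ _⟩

theorem hull_iter (H : OrdData τ Ω Λ) (m : ℕ) : ∀ (z : Λ) (η : ℕ → A), η ∈ Ω → Hul τ Λ m z η →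
    ∃ y ∈ Ω, sh^[m] y = η := by
  induction m with
  | zero => exact fun _ η h _ => ⟨η, h, rfl⟩
  | succ m ih =>
    intro z η hη hh
    by_cases hL : η ∈ Λ
    · obtain ⟨y, hy, h⟩ := surj_iter H (m + 1) η hL
      exact ⟨y, H.sub hy, h⟩
    obtain ⟨s, t, hs, ht, h1, h2⟩ := hh
    have hst := (Erel_equiv (m + 1)).trans hs ((Erel_equiv (m + 1)).symm ht)
    have hsW : τ s.1 < τ η := lt_of_le_of_ne h1 (fun he => hL (H.inj he ▸ s.2))
    have hgen : ∃ s' t' : Λ, Erel τ Λ m s' t' ∧ s'.1 0 = t'.1 0 ∧ τ (sh s'.1) < τ η ∧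
        τ η ≤ τ (sh t'.1) := by
      by_contra hc
      have := hst {x | τ x < τ η} (fun s _ t _ h h' => lt_of_le_of_lt h h') (fun s' t' he h0 => by
        constructor
        · intro h
          by_contra hn
          exact hc ⟨s', t', he, h0, h, not_lt.1 hn⟩
        · intro h
          by_contra hn
          exact hc ⟨t', s', (Erel_equiv m).symm he, h0.symm, h, not_lt.1 hn⟩)
      exact absurd (this.1 hsW) (not_lt.2 h2)
    obtain ⟨s', t', he, h0, h1', h2'⟩ := hgen
    obtain ⟨hΩ, hb⟩ := cns_between H (H.sub s'.2) (H.sub t'.2) h0 hη h1'.le h2'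
    have hh' : Hul τ Λ m s' (cns (s'.1 0) η) := by
      rcases hb with h | h
      · exact ⟨s', t', (Erel_equiv m).refl _, (Erel_equiv m).symm he, h.1, h.2⟩
      · exact ⟨t', s', (Erel_equiv m).symm he, (Erel_equiv m).refl _, h.1, h.2⟩
    obtain ⟨y, hy, hyy⟩ := ih s' _ hΩ hh'
    refine ⟨y, hy, ?_⟩
    rw [Function.iterate_succ_apply', hyy, sh_cns]

theorem gap_of (H : OrdData τ Ω Λ) {w : List A} (hw : LangW Λ w) {η : ℕ → A} (hη : η ∈ Ω)
    (hn : η ∉ Λ) (hwη : InC w η) : Gap τ Ω Λ w := by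
  refine ⟨hw, ?_⟩
  by_contra hc
  push Not at hc
  apply hn
  apply H.limit
  intro m
  obtain ⟨z, hz⟩ := hc m
  exact hull_iter H m z η hη (hz η hη hwη)

theorem LC_count [Finite A] (H : OrdData τ Ω Λ) (n : ℕ) :
    {w : List A | w.length = n ∧ LangW Λ w ∧ ∃ a w', w = a :: w' ∧ ∃ ξ ∈ Λ, InC w' ξ ∧
      cns a ξ ∉ Λ}.ncard ≤ {w : List A | w.length = n ∧ Gap τ Ω Λ w}.ncard + 2 * Nat.card A := by
  let K : A → Set (ℕ → A) := fun a => {ξ | ξ ∈ Ω ∧ cns a ξ ∈ Ω}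
  let S0 : Set (List A) := {w : List A | w.length = n ∧ LangW Λ w ∧ ∃ a w', w = a :: w' ∧
    ∃ ξ ∈ Λ, InC w' ξ ∧ cns a ξ ∉ Ω}
  have hfin : {w : List A | w.length = n ∧ Gap τ Ω Λ w}.Finite :=
    (List.finite_length_eq A n).subset (fun w h => h.1)
  have hfin0 : S0.Finite := (List.finite_length_eq A n).subset (fun w h => h.1)
  have h0 : S0.ncard ≤ 2 * Nat.card A := by
    have := ncard_rel S0 (Set.univ : Set (A × Bool)) (Set.toFinite _)
      (fun w j => ∃ w', w = j.1 :: w' ∧ ∃ z ∈ K j.1, ∃ ξ, InC w' z ∧ InC w' ξ ∧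
        Beyond τ j.2 (K j.1) ξ) ?_ ?_
    · rw [Set.ncard_univ, Nat.card_prod] at this
      simp at this
      omega
    · rintro w ⟨_, ⟨z, hz⟩, a, w', rfl, ξ, hξ, hwξ, hn⟩
      have hb : ∃ d, Beyond τ d (K a) ξ := by
        apply exists_beyond
        rintro ⟨s, hs, t, ht, h1, h2⟩
        exact hn (H.conv (cns a s) (cns a t) ξ hs.2 ht.2 rfl (H.sub hξ) h1 h2)
      obtain ⟨d, hd⟩ := hb
      refine ⟨(a, d), trivial, w', rfl, sh z.1, ⟨H.shOm _ (H.sub z.2), ?_⟩, ξ, hz.2, hwξ, hd⟩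
      rw [← hz.1, cns_sh]
      exact H.sub z.2
    · rintro w hw w' hw' ⟨a, d⟩ ⟨v, rfl, z, hz, η, h1, h2, h3⟩ ⟨v', rfl, z', hz', η', h1', h2', h3'⟩
      have hl : v.length = v'.length := by
        have := hw.1.trans hw'.1.symm
        simpa using this
      exact congrArg _ (unique_cut H hl hz hz' h1 h1' h2 h2' h3 h3')
  have hsub : {w : List A | w.length = n ∧ LangW Λ w ∧ ∃ a w', w = a :: w' ∧ ∃ ξ ∈ Λ, InC w' ξ ∧
      cns a ξ ∉ Λ} ⊆ {w : List A | w.length = n ∧ Gap τ Ω Λ w} ∪ S0 := by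
    rintro w ⟨hl, hw, a, w', rfl, ξ, hξ, hwξ, hn⟩
    by_cases hΩ : cns a ξ ∈ Ω
    · left
      exact ⟨hl, gap_of H hw hΩ hn ⟨rfl, hwξ⟩⟩
    · right
      exact ⟨hl, hw, a, w', rfl, ξ, hξ, hwξ, hΩ⟩
  have := Set.ncard_le_ncard hsub (hfin.union hfin0)
  have := Set.ncard_union_le {w : List A | w.length = n ∧ Gap τ Ω Λ w} S0
  omega

theorem det (H : OrdData τ Ω Λ) {m : ℕ} {w1 w2 : List A} (hl : w1.length = w2.length)
    (h1 : LangW Λ w1) (h2 : LangW Λ w2) (j : ℕ)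
    (hg : ∀ i, 1 ≤ i → i ≤ j → Uncut τ Ω Λ (m + 1) (w1.drop i) ∧ ¬ WBad H m (w1.drop i))
    (hj : w1.drop j = w2.drop j) : w1 = w2 := by
  induction j with
  | zero => simpa using hj
  | succ j ih =>
    apply ih (fun i hi hij => hg i hi (by omega))
    by_cases hlt : j < w1.length
    · have hlt2 : j < w2.length := hl ▸ hlt
      have e1 := List.drop_eq_getElem_cons hlt
      have e2 := List.drop_eq_getElem_cons hlt2
      have l1 := LangW_drop H h1 j
      have l2 := LangW_drop H h2 j
      rw [e1] at l1
      rw [e2, ← hj] at l2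
      rw [e1, e2, ← hj]
      by_contra hne
      have hab : w1[j] ≠ w2[j] := fun h => hne (by rw [h])
      have := hg (j + 1) (by omega) le_rfl
      exact this.2 (lemC H this.1 l1 l2 hab)
    · rw [List.drop_eq_nil_of_le (by omega), List.drop_eq_nil_of_le (by omega)]

end main2

section main3

variable {A L : Type*} [LinearOrder L] {τ : (ℕ → A) → L} {Ω Λ : Set (ℕ → A)}

theorem drop_count [Finite A] (S : Set (List A)) (N c : ℕ) (G : ℕ → Set (List A))
    (hGf : ∀ i, (G i).Finite) (hGc : ∀ i, (G i).ncard ≤ c)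
    (hS : ∀ w ∈ S, ∃ i ≤ N, w.drop i ∈ G i) :
    S.ncard ≤ {l : List A | l.length ≤ N}.ncard * ((N + 1) * c) := by
  have hf : {l : List A | l.length ≤ N}.Finite := List.finite_length_le A N
  have hU : (⋃ i ∈ Finset.range (N + 1), G i).ncard ≤ (N + 1) * c := by
    refine (Finset.set_ncard_biUnion_le _ _).trans ?_
    refine (Finset.sum_le_card_nsmul _ _ c (fun i _ => hGc i)).trans ?_
    simp
  have hUf : (⋃ i ∈ Finset.range (N + 1), G i).Finite :=
    Set.Finite.biUnion (Finset.finite_toSet _) (fun i _ => hGf i)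
  have := ncard_rel S ({l : List A | l.length ≤ N} ×ˢ (⋃ i ∈ Finset.range (N + 1), G i))
    (hf.prod hUf) (fun w j => w = j.1 ++ j.2) ?_ ?_
  · rw [Set.ncard_prod] at this
    exact this.trans (Nat.mul_le_mul_left _ hU)
  · intro w hw
    obtain ⟨i, hi, h⟩ := hS w hw
    refine ⟨(w.take i, w.drop i), ⟨?_, ?_⟩, (List.take_append_drop i w).symm⟩
    · simp only [Set.mem_ofPred_eq, List.length_take]
      omega
    · simp only [Set.mem_iUnion]
      exact ⟨i, by simp; omega, h⟩
  · rintro w _ w' _ j h h'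
    rw [h, h']

theorem lemB' [Finite A] (H : OrdData τ Ω Λ) (n : ℕ) :
    {w : List A | w.length = n ∧ Gap τ Ω Λ w ∧ ¬ Gap τ Ω Λ w.tail}.ncard ≤
      4 * Nat.card A := by
  cases n with
  | succ n => exact lemB H n
  | zero =>
    have : {w : List A | w.length = 0 ∧ Gap τ Ω Λ w ∧ ¬ Gap τ Ω Λ w.tail} = ∅ := by
      ext w
      simp only [Set.mem_ofPred_eq, Set.mem_empty_iff_false, iff_false]
      rintro ⟨h, h1, h2⟩
      rw [List.length_eq_zero_iff] at h
      subst h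
      exact h2 h1
    rw [this]
    simp

/-- number of gappy words -/
noncomputable def gapN (τ : (ℕ → A) → L) (Ω Λ : Set (ℕ → A)) (n : ℕ) : ℕ :=
  {w : List A | w.length = n ∧ Gap τ Ω Λ w}.ncard

theorem recursion [Finite A] (H : OrdData τ Ω Λ) (N : ℕ) : ∃ D, ∀ n, N ≤ n →
    gapN τ Ω Λ (n + N) ≤ (1 + N * (4 * Nat.card A * Nat.card A)) * gapN τ Ω Λ n + D := by
  obtain ⟨m, hm⟩ := exists_level (A := A) (τ := τ) (Ω := Ω) (Λ := Λ) N
  refine ⟨{l : List A | l.length ≤ N}.ncard *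
    ((N + 1) * (4 * Nat.card A + 2 * Nat.card (QE τ Λ (m + 1)))), fun n hn => ?_⟩
  have hfin : ∀ (k : ℕ) (Q : List A → Prop), {w : List A | w.length = k ∧ Q w}.Finite :=
    fun k Q => (List.finite_length_eq A k).subset (fun w h => h.1)
  let G : ℕ → Set (List A) := fun i =>
    {w : List A | w.length = n + N - i ∧ Gap τ Ω Λ w ∧ ¬ Gap τ Ω Λ w.tail} ∪
    {w : List A | w.length = n + N - i ∧ LangW Λ w ∧ ¬ Uncut τ Ω Λ (m + 1) w}
  let W0 : Set (List A) := {w | w.length = n + N ∧ ∃ i ≤ N, w.drop i ∈ G i}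
  let good : List A → Prop := fun w => Gap τ Ω Λ w ∧
    (∀ i ≤ N, Gap τ Ω Λ (w.drop i)) ∧ (∀ i ≤ N, Uncut τ Ω Λ (m + 1) (w.drop i))
  let W1 : Set (List A) := {w | w.length = n + N ∧ good w ∧
    ∀ i, 1 ≤ i → i ≤ N → ¬ WBad H m (w.drop i)}
  let W2 : Set (List A) := {w | w.length = n + N ∧ good w ∧
    ∃ i, 1 ≤ i ∧ i ≤ N ∧ WBad H m (w.drop i)}
  have c0 : W0.ncard ≤ {l : List A | l.length ≤ N}.ncard *
      ((N + 1) * (4 * Nat.card A + 2 * Nat.card (QE τ Λ (m + 1)))) := by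
    refine drop_count W0 N _ G (fun i => (hfin _ _).union (hfin _ _)) (fun i => ?_)
      (fun w hw => hw.2)
    exact (Set.ncard_union_le _ _).trans (Nat.add_le_add (lemB' H _) (cut_count H _ _))
  have c1 : W1.ncard ≤ gapN τ Ω Λ n := by
    refine Set.ncard_le_ncard_of_injOn (fun w => w.drop N) ?_ ?_ (hfin _ _)
    · rintro w ⟨hl, hg, _⟩
      refine ⟨?_, hg.2.1 N le_rfl⟩
      simp [hl]
    · rintro w ⟨hl, hg, hb⟩ w' ⟨hl', hg', hb'⟩ h
      exact det H (hl.trans hl'.symm) hg.1.1 hg'.1.1 N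
        (fun i h1 h2 => ⟨hg.2.2 i h2, hb i h1 h2⟩) h
  let U : Set (List A) := {w | w.length = N ∧ ¬ Uncut τ Ω Λ (m + 1) w ∧ WBad H m w}
  have c2 : W2.ncard ≤ gapN τ Ω Λ n * (N * (4 * Nat.card A * Nat.card A)) := by
    have := ncard_rel W2 ({w : List A | w.length = n ∧ Gap τ Ω Λ w} ×ˢ
      ((Finset.Icc 1 N : Finset ℕ) : Set ℕ) ×ˢ U ×ˢ (Set.univ : Set A))
      ((hfin _ _).prod ((Finset.finite_toSet _).prod ((hfin _ _).prod (Set.toFinite _))))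
      (fun w j => w.drop N = j.1 ∧ 1 ≤ j.2.1 ∧ j.2.1 ≤ N ∧ (w.drop j.2.1).take N = j.2.2.1 ∧
        w[j.2.1 - 1]? = some j.2.2.2 ∧ ∀ i, 1 ≤ i → i < j.2.1 → ¬ WBad H m (w.drop i)) ?_ ?_
    · rw [Set.ncard_prod, Set.ncard_prod, Set.ncard_prod, Set.ncard_univ, Set.ncard_coe_finset] at this
      refine this.trans ?_
      have hU : U.ncard ≤ 4 * Nat.card A := U_count H m N
      simp only [Nat.card_Icc, Nat.add_sub_cancel]
      exact Nat.mul_le_mul_left _ (Nat.mul_le_mul_left _ (Nat.mul_le_mul_right _ hU))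
    · rintro w ⟨hl, hg, hex⟩
      classical
      obtain ⟨i, ⟨hi1, hiN, hib⟩, hmin⟩ := 
        (⟨Nat.find hex, Nat.find_spec hex, fun k hk => Nat.find_min hex hk⟩ :
          ∃ i, (1 ≤ i ∧ i ≤ N ∧ WBad H m (w.drop i)) ∧
            ∀ k < i, ¬ (1 ≤ k ∧ k ≤ N ∧ WBad H m (w.drop k)))
      have hlt : i - 1 < w.length := by omega
      have hlen : ((w.drop i).take N).length = N := by simp; omega
      refine ⟨(w.drop N, i, (w.drop i).take N, w[i - 1]), ⟨⟨by simp [hl], hg.2.1 N le_rfl⟩,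
        ?_, ⟨hlen, ?_, ?_⟩, trivial⟩, rfl, hi1, hiN, rfl, List.getElem?_eq_getElem hlt, ?_⟩
      · simp [hi1, hiN]
      · exact hm _ hlen (Gap_take (hg.2.1 i hiN) N) (m + 1) (by omega)
      · obtain ⟨z, hz, hzb⟩ := hib
        exact ⟨z, InC_take N hz, hzb⟩
      · intro k h1 h2 h3
        have h2' : k < i := h2
        exact hmin k h2' ⟨h1, by omega, h3⟩
    · rintro w ⟨hl, hg, _⟩ w' ⟨hl', hg', _⟩ ⟨v, i, u, a⟩ ⟨h1, h2, h3, h4, h5, h6⟩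
        ⟨h1', -, -, h4', h5', -⟩
      simp only at h1 h2 h3 h4 h5 h6 h1' h4' h5'
      have e1 : w.drop i = w'.drop i := by
        rw [← List.take_append_drop N (w.drop i), ← List.take_append_drop N (w'.drop i), h4, h4',
          List.drop_drop, List.drop_drop, Nat.add_comm i N, ← List.drop_drop, ← List.drop_drop,
          h1, h1']
      have hlt : i - 1 < w.length := by omega
      have hlt' : i - 1 < w'.length := by omega
      have e2 : w.drop (i - 1) = w'.drop (i - 1) := by
        rw [List.drop_eq_getElem_cons hlt, List.drop_eq_getElem_cons hlt']
        rw [List.getElem?_eq_getElem hlt] at h5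
        rw [List.getElem?_eq_getElem hlt'] at h5'
        rw [Option.some.inj h5, Option.some.inj h5', Nat.sub_add_cancel h2, e1]
      exact det H (hl.trans hl'.symm) hg.1.1 hg'.1.1 (i - 1)
        (fun k hk1 hk2 => ⟨hg.2.2 k (by omega), h6 k hk1 (by omega)⟩) e2
  have hsub : {w : List A | w.length = n + N ∧ Gap τ Ω Λ w} ⊆ W0 ∪ (W1 ∪ W2) := by
    rintro w ⟨hl, hw⟩
    by_cases h0 : ∃ i ≤ N, w.drop i ∈ G i
    · exact Or.inl ⟨hl, h0⟩
    right
    push Not at h0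
    have hgap : ∀ i ≤ N, Gap τ Ω Λ (w.drop i) := by
      intro i
      induction i with
      | zero => intro _; simpa using hw
      | succ i ih =>
        intro hi
        by_contra hc
        refine h0 i (by omega) (Or.inl ⟨by simp [hl], ih (by omega), ?_⟩)
        rwa [List.tail_drop]
    have hgood : good w := by
      refine ⟨hw, hgap, fun i hi => ?_⟩
      by_contra hc
      exact h0 i hi (Or.inr ⟨by simp [hl], (hgap i hi).1, hc⟩)
    by_cases hb : ∃ i, 1 ≤ i ∧ i ≤ N ∧ WBad H m (w.drop i)
    · exact Or.inr ⟨hl, hgood, hb⟩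
    · refine Or.inl ⟨hl, hgood, fun i h1 h2 h3 => hb ⟨i, h1, h2, h3⟩⟩
  have t1 : gapN τ Ω Λ (n + N) ≤ (W0 ∪ (W1 ∪ W2)).ncard :=
    Set.ncard_le_ncard hsub ((hfin _ _).union ((hfin _ _).union (hfin _ _)))
  have t2 := Set.ncard_union_le W0 (W1 ∪ W2)
  have t3 := Set.ncard_union_le W1 W2
  calc _ ≤ W0.ncard + (W1.ncard + W2.ncard) := by omega
    _ ≤ _ + (gapN τ Ω Λ n + gapN τ Ω Λ n * (N * (4 * Nat.card A * Nat.card A))) :=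
      Nat.add_le_add c0 (Nat.add_le_add c1 c2)
    _ = _ := by ring

end main3

theorem growth (a : ℕ → ℕ) (c : ℕ) (h : ∀ N, ∃ D, ∀ n, N ≤ n →
    a (n + N) ≤ (1 + N * c) * a n + D) (ε : ℝ) (hε : 0 < ε) :
    ∃ C : ℝ, 1 ≤ C ∧ ∀ n : ℕ, (a n : ℝ) ≤ C * Real.exp (ε * n) := by
  obtain ⟨N, hN1, hN⟩ : ∃ N : ℕ, 1 ≤ N ∧ ((1 + N * c : ℕ) : ℝ) + 1 ≤ Real.exp (ε * N) := by
    obtain ⟨N, hN⟩ := exists_nat_ge (max (2 / ε * (2 : ℝ)) (2 * c / ε ^ 2 * 2))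
    have h1 : 4 ≤ ε * N := by
      have := (le_max_left _ _).trans hN
      rw [div_mul_eq_mul_div, div_le_iff₀ hε] at this
      linarith
    have h2 : 4 * c ≤ ε ^ 2 * N := by
      have := (le_max_right _ _).trans hN
      rw [div_mul_eq_mul_div, div_le_iff₀ (by positivity)] at this
      linarith
    refine ⟨N, ?_, ?_⟩
    · rcases Nat.eq_zero_or_pos N with h | h
      · subst h; norm_num at h1
      · exact h
    · have h3 := Real.quadratic_le_exp_of_nonneg (x := ε * N) (by positivity)
      have h4 : (N : ℝ) * (4 * c) ≤ N * (ε ^ 2 * N) := by gcongr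
      push_cast
      nlinarith
  obtain ⟨D, hD⟩ := h N
  refine ⟨1 + D + ∑ i ∈ Finset.range (2 * N), (a i : ℝ), ?_, ?_⟩
  · have : 0 ≤ ∑ i ∈ Finset.range (2 * N), (a i : ℝ) := Finset.sum_nonneg (fun _ _ => by positivity)
    have : (0 : ℝ) ≤ D := by positivity
    linarith
  set C : ℝ := 1 + D + ∑ i ∈ Finset.range (2 * N), (a i : ℝ) with hC
  have hs : 0 ≤ ∑ i ∈ Finset.range (2 * N), (a i : ℝ) := Finset.sum_nonneg (fun _ _ => by positivity)
  have hD0 : (0 : ℝ) ≤ D := by positivity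
  have hC0 : 0 ≤ C := by rw [hC]; linarith
  intro n
  induction n using Nat.strong_induction_on with
  | _ n ih =>
    by_cases hlt : n < 2 * N
    · have h1 : (a n : ℝ) ≤ ∑ i ∈ Finset.range (2 * N), (a i : ℝ) :=
        Finset.single_le_sum (f := fun i => (a i : ℝ)) (fun _ _ => by positivity) (by simpa using hlt)
      have h2 : (1 : ℝ) ≤ Real.exp (ε * n) := Real.one_le_exp (by positivity)
      have : (a n : ℝ) ≤ C := by rw [hC]; linarith
      nlinarith
    · obtain ⟨k, rfl⟩ : ∃ k, n = k + N := ⟨n - N, by omega⟩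
      have h1 := ih k (by omega)
      have h2 : (a (k + N) : ℝ) ≤ ((1 + N * c : ℕ) : ℝ) * a k + D := by
        exact_mod_cast hD k (by omega)
      have h3 : (1 : ℝ) ≤ Real.exp (ε * k) := Real.one_le_exp (by positivity)
      have h4 : (D : ℝ) ≤ C * Real.exp (ε * k) := by
        have : (D : ℝ) ≤ C := by rw [hC]; linarith
        nlinarith
      have h5 : ((1 + N * c : ℕ) : ℝ) * a k ≤ ((1 + N * c : ℕ) : ℝ) * (C * Real.exp (ε * k)) := by
        gcongr
      calc (a (k + N) : ℝ) ≤ (((1 + N * c : ℕ) : ℝ) + 1) * (C * Real.exp (ε * k)) := by linarith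
        _ ≤ Real.exp (ε * N) * (C * Real.exp (ε * k)) := by gcongr
        _ = C * Real.exp (ε * ((k + N : ℕ) : ℝ)) := by
          push_cast
          rw [mul_add, Real.exp_add]
          ring

theorem limsup_zero (l : ℕ → ℕ) (h : ∀ ε : ℝ, 0 < ε → ∃ C : ℝ, 1 ≤ C ∧ ∀ n : ℕ, 2 ≤ n →
    (l n : ℝ) ≤ C * Real.exp (ε * n)) :
    limsup (fun n : ℕ => max 0 (Real.log (l n)) / (n : ℝ)) atTop = 0 := by
  apply Tendsto.limsup_eq
  rw [Metric.tendsto_atTop]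
  intro ε hε
  obtain ⟨C, hC1, hC⟩ := h (ε / 3) (by positivity)
  obtain ⟨M, hM⟩ := exists_nat_ge (3 * Real.log C / ε)
  refine ⟨M + 2, fun n hn => ?_⟩
  have hn0 : (0 : ℝ) < n := by
    have : 0 < n := by omega
    exact_mod_cast this
  have hlogC : 0 ≤ Real.log C := Real.log_nonneg hC1
  have hMn : (M : ℝ) ≤ n := by
    have : M ≤ n := by omega
    exact_mod_cast this
  have h1 : 3 * Real.log C ≤ ε * n := by
    have := hM.trans hMn
    rw [div_le_iff₀ hε] at this
    linarith
  have hle : max 0 (Real.log (l n)) ≤ Real.log C + ε / 3 * n := by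
    apply max_le
    · positivity
    · rcases Nat.eq_zero_or_pos (l n) with h0 | h0
      · rw [h0]; simp; positivity
      · have h0' : (0 : ℝ) < l n := by exact_mod_cast h0
        have := Real.log_le_log h0' (hC n (by omega))
        rwa [Real.log_mul (by positivity) (by positivity), Real.log_exp] at this
  have hnn : 0 ≤ max 0 (Real.log (l n)) / (n : ℝ) := by positivity
  rw [Real.dist_eq, sub_zero, abs_of_nonneg hnn, div_lt_iff₀ hn0]
  have : 0 < ε * n := by positivity
  nlinarith

theorem main_abs {A L : Type*} [LinearOrder L] [Finite A] {τ : (ℕ → A) → L} {Ω Λ : Set (ℕ → A)}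
    (H : OrdData τ Ω Λ) (l : ℕ → ℕ) (hl : ∀ n, 2 ≤ n → l n ≤
      {w : List A | w.length = n ∧ LangW Λ w ∧ ∃ a w', w = a :: w' ∧ ∃ ξ ∈ Λ, InC w' ξ ∧
      cns a ξ ∉ Λ}.ncard) :
    limsup (fun n : ℕ => max 0 (Real.log (l n)) / (n : ℝ)) atTop = 0 := by
  apply limsup_zero
  intro ε hε
  obtain ⟨C, hC1, hC⟩ := growth (gapN τ Ω Λ) (4 * Nat.card A * Nat.card A)
    (fun N => recursion H N) ε hε
  refine ⟨C + 2 * Nat.card A, by have : (0:ℝ) ≤ Nat.card A := by positivity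
                                 linarith, fun n hn => ?_⟩
  have h1 : (l n : ℝ) ≤ gapN τ Ω Λ n + 2 * Nat.card A := by
    exact_mod_cast (hl n hn).trans (LC_count H n)
  have h2 := hC n
  have h3 : (1 : ℝ) ≤ Real.exp (ε * n) := Real.one_le_exp (by positivity)
  have h4 : (0:ℝ) ≤ Nat.card A := by positivity
  nlinarith

section keys

variable {A : Type*} (κ ε : A → ℝ)

def key : ℕ → (ℕ → A) → ℝ
  | 0, x => κ (x 0)
  | k + 1, x => ε (x 0) * key k (sh x)

theorem key_eq (hκ : Function.Injective κ) (hε : ∀ a, ε a = 1 ∨ ε a = -1) (n : ℕ) :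
    ∀ x y : ℕ → A, (∀ j < n, key κ ε j x = key κ ε j y) ↔ ∀ j < n, x j = y j := by
  induction n with
  | zero => intro x y; simp
  | succ n ih =>
    intro x y
    constructor
    · intro h j hj
      have h0 : x 0 = y 0 := hκ (h 0 (by omega))
      cases j with
      | zero => exact h0
      | succ j =>
        refine (ih (sh x) (sh y)).1 (fun i hi => ?_) j (by omega)
        have h1 : ε (x 0) * key κ ε i (sh x) = ε (y 0) * key κ ε i (sh y) := h (i + 1) (by omega)
        rw [h0] at h1
        refine mul_left_cancel₀ ?_ h1
        rcases hε (y 0) with h | h <;> rw [h] <;> norm_num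
    · intro h j hj
      have h0 : x 0 = y 0 := h 0 (by omega)
      cases j with
      | zero => change κ _ = κ _; rw [h0]
      | succ j =>
        change ε _ * _ = ε _ * _
        rw [h0, (ih (sh x) (sh y)).2 (fun i hi => h (i + 1) (by omega)) j (by omega)]

noncomputable def tau (x : ℕ → A) : Lex (ℕ → ℝ) := toLex (fun k => key κ ε k x)

theorem tau_lt {x y : ℕ → A} : tau κ ε x < tau κ ε y ↔
    ∃ i, (∀ j < i, key κ ε j x = key κ ε j y) ∧ key κ ε i x < key κ ε i y := Iff.rfl

theorem tau_inj (hκ : Function.Injective κ) (hε : ∀ a, ε a = 1 ∨ ε a = -1) :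
    Function.Injective (tau κ ε) := by
  intro x y h
  funext k
  have h' : (fun k => key κ ε k x) = (fun k => key κ ε k y) := toLex.injective h
  exact (key_eq κ ε hκ hε (k + 1) x y).1 (fun j _ => congrFun h' j) k (by omega)

theorem tau_o1 (hκ : Function.Injective κ) (hε : ∀ a, ε a = 1 ∨ ε a = -1)
    (n : ℕ) (x y x' y' : ℕ → A) (h : tau κ ε x < tau κ ε y) (hd : ∃ i < n, x i ≠ y i)
    (hx : ∀ i < n, x i = x' i) (hy : ∀ i < n, y i = y' i) : tau κ ε x' < tau κ ε y' := by
  rw [tau_lt] at h ⊢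
  obtain ⟨i, h1, h2⟩ := h
  have hi : i < n := by
    by_contra hc
    obtain ⟨j, hj, hne⟩ := hd
    exact hne ((key_eq κ ε hκ hε n x y).1 (fun j hj => h1 j (by omega)) j hj)
  have ex := (key_eq κ ε hκ hε n x x').2 hx
  have ey := (key_eq κ ε hκ hε n y y').2 hy
  refine ⟨i, fun j hj => ?_, ?_⟩
  · rw [← ex j (by omega), ← ey j (by omega), h1 j hj]
  · rw [← ex i hi, ← ey i hi]; exact h2

theorem tau_pos {x y : ℕ → A} (h0 : x 0 = y 0) (he : ε (x 0) = 1) (h : tau κ ε x < tau κ ε y) :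
    tau κ ε (sh x) < tau κ ε (sh y) := by
  rw [tau_lt] at h ⊢
  obtain ⟨i, h1, h2⟩ := h
  cases i with
  | zero => 
    change κ _ < κ _ at h2
    rw [h0] at h2; exact absurd h2 (lt_irrefl _)
  | succ i =>
    refine ⟨i, fun j hj => ?_, ?_⟩
    · have : ε (x 0) * key κ ε j (sh x) = ε (y 0) * key κ ε j (sh y) := h1 (j + 1) (by omega)
      rw [← h0, he] at this; linarith
    · change ε (x 0) * key κ ε i (sh x) < ε (y 0) * key κ ε i (sh y) at h2
      rw [← h0, he] at h2; linarith

theorem tau_neg {x y : ℕ → A} (h0 : x 0 = y 0) (he : ε (x 0) = -1) (h : tau κ ε x < tau κ ε y) :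
    tau κ ε (sh y) < tau κ ε (sh x) := by
  rw [tau_lt] at h ⊢
  obtain ⟨i, h1, h2⟩ := h
  cases i with
  | zero => 
    change κ _ < κ _ at h2
    rw [h0] at h2; exact absurd h2 (lt_irrefl _)
  | succ i =>
    refine ⟨i, fun j hj => ?_, ?_⟩
    · have : ε (x 0) * key κ ε j (sh x) = ε (y 0) * key κ ε j (sh y) := h1 (j + 1) (by omega)
      rw [← h0, he] at this; linarith
    · change ε (x 0) * key κ ε i (sh x) < ε (y 0) * key κ ε i (sh y) at h2
      rw [← h0, he] at h2; linarith

theorem tau_zero (hκ : Function.Injective κ) {x y : ℕ → A} (h0 : x 0 ≠ y 0) (h : tau κ ε x < tau κ ε y) :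
    κ (x 0) < κ (y 0) := by
  rw [tau_lt] at h
  obtain ⟨i, h1, h2⟩ := h
  cases i with
  | zero => exact h2
  | succ i => exact absurd (hκ (h1 0 (by omega))) h0

end keys

section pieces

theorem mono_union {f : ℝ → ℝ} {J J' : Set ℝ} (hJ : J.OrdConnected) (hJ' : J'.OrdConnected)
    {r : ℝ} (hr : r ∈ J) (hr' : r ∈ J') (h : StrictMonoOn f J) (h' : StrictMonoOn f J') :
    StrictMonoOn f (J ∪ J') := by
  have aux : ∀ (J J' : Set ℝ), J.OrdConnected → J'.OrdConnected → r ∈ J → r ∈ J' →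
      StrictMonoOn f J → StrictMonoOn f J' → ∀ x ∈ J, ∀ y ∈ J', x < y → f x < f y := by
    intro J J' hJ hJ' hr hr' h h' x hx y hy hxy
    rcases le_or_gt r x with h1 | h1
    · exact h' (hJ'.out hr' hy ⟨h1, hxy.le⟩) hy hxy
    rcases le_or_gt y r with h2 | h2
    · exact h hx (hJ.out hx hr ⟨hxy.le, h2⟩) hxy
    exact (h hx hr h1).trans (h' hr' hy h2)
  rintro x (hx | hx) y (hy | hy) hxy
  · exact h hx hy hxy
  · exact aux J J' hJ hJ' hr hr' h h' x hx y hy hxy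
  · exact aux J' J hJ' hJ hr' hr h' h x hx y hy hxy
  · exact h' hx hy hxy

theorem anti_union {f : ℝ → ℝ} {J J' : Set ℝ} (hJ : J.OrdConnected) (hJ' : J'.OrdConnected)
    {r : ℝ} (hr : r ∈ J) (hr' : r ∈ J') (h : StrictAntiOn f J) (h' : StrictAntiOn f J') :
    StrictAntiOn f (J ∪ J') := by
  have := mono_union (f := fun x => - f x) hJ hJ' hr hr' (fun x hx y hy hxy => neg_lt_neg (h hx hy hxy))
    (fun x hx y hy hxy => neg_lt_neg (h' hx hy hxy))
  exact fun x hx y hy hxy => neg_lt_neg_iff.1 (this hx hy hxy)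

variable {f : ℝ → ℝ} {I : Set ℝ} {P : Finset (Set ℝ)}

theorem piece_eq (hP : IsNaturalPartition f I P) {J J' : Set ℝ} (hJ : J ∈ P) (hJ' : J' ∈ P)
    {r : ℝ} (hr : r ∈ J) (hr' : r ∈ J') : J = J' := by
  obtain ⟨-, ⟨⟨c, d, rfl⟩, hs, hc, hm⟩, hmax⟩ := (hP J).1 hJ
  obtain ⟨-, ⟨⟨c', d', rfl⟩, hs', hc', hm'⟩, hmax'⟩ := (hP J').1 hJ'
  have hU : Ioo c d ∪ Ioo c' d' = Ioo (min c c') (max d d') :=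
    Set.Ioo_union_Ioo' (hr'.1.trans hr.2) (hr.1.trans hr'.2)
  obtain ⟨q, hq1, hq2⟩ : ∃ q, r < q ∧ q < min d d' := exists_between (lt_min hr.2 hr'.2)
  have hqJ : q ∈ Ioo c d := ⟨hr.1.trans hq1, hq2.trans_le (min_le_left _ _)⟩
  have hqJ' : q ∈ Ioo c' d' := ⟨hr'.1.trans hq1, hq2.trans_le (min_le_right _ _)⟩
  have hgood : GoodPiece f I (Ioo c d ∪ Ioo c' d') := by
    refine ⟨⟨_, _, hU⟩, Set.union_subset hs hs', hc.union_of_isOpen hc' isOpen_Ioo isOpen_Ioo, ?_⟩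
    rcases hm with hm | hm <;> rcases hm' with hm' | hm'
    · exact Or.inl (mono_union ordConnected_Ioo ordConnected_Ioo hr hr' hm hm')
    · exact absurd (hm hr hqJ hq1) (hm' hr' hqJ' hq1).asymm
    · exact absurd (hm hr hqJ hq1) (hm' hr' hqJ' hq1).asymm
    · exact Or.inr (anti_union ordConnected_Ioo ordConnected_Ioo hr hr' hm hm')
  rw [← hmax _ hgood Set.subset_union_left]
  exact hmax' _ hgood Set.subset_union_right

end pieces

section geom

variable {f : ℝ → ℝ} {I : Set ℝ} {P : Finset (Set ℝ)}

abbrev Alp (P : Finset (Set ℝ)) := {J // J ∈ P}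

/-- `r` realizes `x` up to time `k`. -/
def Rz (f : ℝ → ℝ) {P : Finset (Set ℝ)} (k : ℕ) (r : ℝ) (x : ℕ → Alp P) : Prop :=
  ∀ j ≤ k, f^[j] r ∈ (x j).1

def Om (f : ℝ → ℝ) (P : Finset (Set ℝ)) : Set (ℕ → Alp P) := {x | ∀ k, ∃ r, Rz f k r x}

def La (f : ℝ → ℝ) (P : Finset (Set ℝ)) : Set (ℕ → Alp P) :=
  {x | ∃ B ∈ symbolic f P, ∀ k : ℕ, x k = B k}

theorem Rz_sh {k : ℕ} {r : ℝ} {x : ℕ → Alp P} (h : Rz f (k + 1) r x) : Rz f k (f r) (sh x) :=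
  fun j hj => h (j + 1) (by omega)

theorem mem_sym {B : ℤ → Alp P} : B ∈ symbolic f P ↔ ∀ n : ℤ, (fun k : ℕ => B (n + k)) ∈ Om f P := by
  constructor
  · intro h n k
    obtain ⟨r, hr⟩ := h n k
    rw [Set.mem_iInter] at hr
    exact ⟨r, fun j hj => hr ⟨j, by omega⟩⟩
  · intro h n k
    obtain ⟨r, hr⟩ := h n k
    refine ⟨r, Set.mem_iInter.2 (fun j => hr j (by have := j.2; omega))⟩

theorem Om_sh (x : ℕ → Alp P) (h : x ∈ Om f P) : sh x ∈ Om f P := by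
  intro k
  obtain ⟨r, hr⟩ := h (k + 1)
  exact ⟨f r, Rz_sh hr⟩

theorem sh_iter {A : Type*} (j : ℕ) : ∀ (x : ℕ → A), sh^[j] x = fun k => x (k + j) := by
  induction j with
  | zero => intro x; rfl
  | succ j ih =>
    intro x
    rw [Function.iterate_succ_apply, ih]
    funext k
    change x (k + j + 1) = _
    congr 1

theorem Om_iter (j : ℕ) (x : ℕ → Alp P) (h : x ∈ Om f P) : sh^[j] x ∈ Om f P := by
  induction j with
  | zero => exact h
  | succ j ih => rw [Function.iterate_succ_apply']; exact Om_sh _ ih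

theorem La_sub : La f P ⊆ Om f P := by
  rintro x ⟨B, hB, h⟩
  have := mem_sym.1 hB 0
  have he : x = (fun k : ℕ => B (0 + k)) := by
    funext k; rw [h]; simp
  rwa [he]

theorem sym_translate {B : ℤ → Alp P} (h : B ∈ symbolic f P) (c : ℤ) :
    (fun n => B (n + c)) ∈ symbolic f P := by
  rw [mem_sym] at h ⊢
  intro n
  have := h (n + c)
  have he : (fun k : ℕ => B (n + k + c)) = fun k : ℕ => B (n + c + k) := by
    funext k
    congr 1
    ring
  change (fun k : ℕ => B (n + k + c)) ∈ Om f P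
  rw [he]
  exact this

theorem La_sh (x : ℕ → Alp P) (h : x ∈ La f P) : sh x ∈ La f P := by
  obtain ⟨B, hB, h⟩ := h
  refine ⟨_, sym_translate hB 1, fun k => ?_⟩
  change x (k + 1) = _
  rw [h]
  push_cast
  rfl

theorem La_surj (x : ℕ → Alp P) (h : x ∈ La f P) : ∃ y ∈ La f P, sh y = x := by
  obtain ⟨B, hB, h⟩ := h
  refine ⟨fun k => B (k + (-1)), ⟨_, sym_translate hB (-1), fun k => rfl⟩, ?_⟩
  funext k
  change B (((k + 1 : ℕ) : ℤ) + (-1)) = x k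
  rw [h]
  congr 1
  push_cast
  ring

theorem Om_closed : letI : TopologicalSpace (Alp P) := ⊥; IsClosed (Om f P) := by
  letI : TopologicalSpace (Alp P) := ⊥
  haveI : DiscreteTopology (Alp P) := ⟨rfl⟩
  have : Om f P = ⋂ k : ℕ, (fun (x : ℕ → Alp P) (j : Fin (k + 1)) => x j) ⁻¹'
      {v | ∃ r, ∀ j : Fin (k + 1), f^[(j : ℕ)] r ∈ (v j).1} := by
    ext x
    simp only [Set.mem_iInter, Set.mem_preimage]
    constructor
    · intro h k
      obtain ⟨r, hr⟩ := h k
      exact ⟨r, fun j => hr j (by have := j.2; omega)⟩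
    · intro h k
      obtain ⟨r, hr⟩ := h k
      exact ⟨r, fun j hj => hr ⟨j, by omega⟩⟩
  rw [this]
  refine isClosed_iInter (fun k => (isClosed_discrete _).preimage ?_)
  fun_prop

theorem sym_closed : letI : TopologicalSpace (Alp P) := ⊥; IsClosed (symbolic f P) := by
  letI : TopologicalSpace (Alp P) := ⊥
  haveI : symbolic f P = ⋂ n : ℤ, (fun (B : ℤ → Alp P) (k : ℕ) => B (n + k)) ⁻¹' (Om f P) := by
    ext B
    rw [mem_sym, Set.mem_iInter]
    rfl
  rw [this]
  refine isClosed_iInter (fun n => IsClosed.preimage ?_ Om_closed)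
  fun_prop

theorem La_limit (η : ℕ → Alp P) (h : ∀ m : ℕ, ∃ y ∈ Om f P, sh^[m] y = η) : η ∈ La f P := by
  letI : TopologicalSpace (Alp P) := ⊥
  haveI : DiscreteTopology (Alp P) := ⟨rfl⟩
  let Z : ℕ → Set (ℤ → Alp P) := fun m =>
    {B | (∀ k : ℕ, B k = η k) ∧ (fun k : ℕ => B (-(m : ℤ) + k)) ∈ Om f P}
  have hcl : ∀ m, IsClosed (Z m) := by
    intro m
    have : Z m = (⋂ k : ℕ, (fun B : ℤ → Alp P => B k) ⁻¹' {η k}) ∩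
        (fun (B : ℤ → Alp P) (k : ℕ) => B (-(m : ℤ) + k)) ⁻¹' (Om f P) := by
      ext B
      rw [Set.mem_inter_iff, Set.mem_iInter]
      rfl
    rw [this]
    refine IsClosed.inter (isClosed_iInter fun k => (isClosed_discrete _).preimage (by fun_prop))
      (IsClosed.preimage (by fun_prop) Om_closed)
  have hne : (⋂ m, Z m).Nonempty := by
    refine IsCompact.nonempty_iInter_of_sequence_nonempty_isCompact_isClosed Z ?_ ?_
      (hcl 0).isCompact hcl
    · rintro m B ⟨h1, h2⟩
      refine ⟨h1, ?_⟩
      convert Om_sh _ h2 using 1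
      funext k
      change _ = B _
      congr 1
      push_cast
      ring
    · intro m
      obtain ⟨y, hy, he⟩ := h m
      refine ⟨fun n => y (n + m).toNat, fun k => ?_, ?_⟩
      · rw [← he, sh_iter]
        congr 1
      · convert hy using 1
        funext k
        change y _ = y k
        congr 1
        omega
  obtain ⟨B, hB⟩ := hne
  rw [Set.mem_iInter] at hB
  refine ⟨B, ?_, fun k => ((hB 0).1 k).symm⟩
  rw [mem_sym]
  intro n
  have := Om_iter (n + n.natAbs).toNat _ (hB n.natAbs).2
  rw [sh_iter] at this
  convert this using 1
  funext k
  change B _ = B _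
  congr 1
  omega

/-- chosen point of a letter -/
noncomputable def kap (hP : IsNaturalPartition f I P) (J : Alp P) : ℝ := ((hP J.1).1 J.2).1.choose

theorem kap_mem (hP : IsNaturalPartition f I P) (J : Alp P) : kap hP J ∈ J.1 :=
  ((hP J.1).1 J.2).1.choose_spec

open Classical in
noncomputable def eps (f : ℝ → ℝ) (J : Alp P) : ℝ := if StrictMonoOn f J.1 then 1 else -1

theorem eps_or (J : Alp P) : eps f J = 1 ∨ eps f J = -1 := by
  unfold eps
  split_ifs <;> simp

theorem eps_mono {J : Alp P} (h : eps f J = 1) : StrictMonoOn f J.1 := by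
  unfold eps at h
  split_ifs at h with h1
  · exact h1
  · norm_num at h

theorem eps_anti (hP : IsNaturalPartition f I P) {J : Alp P} (h : eps f J = -1) :
    StrictAntiOn f J.1 := by
  unfold eps at h
  split_ifs at h with h1
  · norm_num at h
  · exact ((hP J.1).1 J.2).2.1.2.2.2.resolve_left h1

theorem kap_inj (hP : IsNaturalPartition f I P) : Function.Injective (kap hP) := by
  intro J J' h
  refine Subtype.ext (piece_eq hP J.2 J'.2 (kap_mem hP J) ?_)
  rw [h]
  exact kap_mem hP J'

theorem piece_oc (hP : IsNaturalPartition f I P) (J : Alp P) : J.1.OrdConnected := by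
  obtain ⟨-, ⟨⟨c, d, h⟩, -⟩, -⟩ := (hP J.1).1 J.2
  rw [h]
  exact ordConnected_Ioo

theorem letter_lt (hP : IsNaturalPartition f I P) {J J' : Alp P} (h : kap hP J < kap hP J')
    {r r' : ℝ} (hr : r ∈ J.1) (hr' : r' ∈ J'.1) : r < r' := by
  have hne : J ≠ J' := by rintro rfl; exact lt_irrefl _ h
  by_contra hc
  rcases le_or_gt (kap hP J) r' with h1 | h1
  · exact hne (Subtype.ext (piece_eq hP J.2 J'.2
      ((piece_oc hP J).out (kap_mem hP J) hr ⟨h1, not_lt.1 hc⟩) hr'))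
  · exact hne (Subtype.ext (piece_eq hP J.2 J'.2 (kap_mem hP J)
      ((piece_oc hP J').out hr' (kap_mem hP J') ⟨h1.le, h.le⟩)))

theorem real_lt (hP : IsNaturalPartition f I P) (k : ℕ) : ∀ (x y : ℕ → Alp P) (r r' : ℝ),
    Rz f k r x → Rz f k r' y → (∃ i ≤ k, x i ≠ y i) →
    tau (kap hP) (eps f) x < tau (kap hP) (eps f) y → r < r' := by
  induction k with
  | zero =>
    rintro x y r r' hr hr' ⟨i, hi, hne⟩ h
    obtain rfl : i = 0 := by omega
    exact letter_lt hP (tau_zero _ _ (kap_inj hP) hne h) (hr 0 le_rfl) (hr' 0 le_rfl)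
  | succ k ih =>
    rintro x y r r' hr hr' ⟨i, hi, hne⟩ h
    by_cases h0 : x 0 = y 0
    · have hd : ∃ i ≤ k, sh x i ≠ sh y i := by
        cases i with
        | zero => exact absurd h0 hne
        | succ i => exact ⟨i, by omega, hne⟩
      have m1 : r ∈ (x 0).1 := hr 0 (by omega)
      have m2 : r' ∈ (x 0).1 := by rw [h0]; exact hr' 0 (by omega)
      rcases eps_or (f := f) (x 0) with he | he
      · have := ih _ _ _ _ (Rz_sh hr) (Rz_sh hr') hd (tau_pos _ _ h0 he h)
        exact ((eps_mono he).lt_iff_lt m1 m2).1 this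
      · have := ih _ _ _ _ (Rz_sh hr') (Rz_sh hr) (by simpa only [ne_comm] using hd)
          (tau_neg _ _ h0 he h)
        exact ((eps_anti hP he).lt_iff_gt m2 m1).1 this
    · exact letter_lt hP (tau_zero _ _ (kap_inj hP) h0 h) (hr 0 (by omega)) (hr' 0 (by omega))

theorem Om_conv (hP : IsNaturalPartition f I P) (x y η : ℕ → Alp P) (hx : x ∈ Om f P)
    (hy : y ∈ Om f P) (h0 : x 0 = y 0) (hη : η ∈ Om f P)
    (h1 : tau (kap hP) (eps f) (sh x) ≤ tau (kap hP) (eps f) η)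
    (h2 : tau (kap hP) (eps f) η ≤ tau (kap hP) (eps f) (sh y)) : cns (x 0) η ∈ Om f P := by
  have hinj := tau_inj (kap hP) (eps f) (kap_inj hP) eps_or
  by_cases e1 : sh x = η
  · rw [← e1, cns_sh]; exact hx
  by_cases e2 : η = sh y
  · rw [e2, h0, cns_sh]; exact hy
  have h1' := lt_of_le_of_ne h1 (fun h => e1 (hinj h))
  have h2' := lt_of_le_of_ne h2 (fun h => e2 (hinj h))
  obtain ⟨i1, hi1⟩ := Function.ne_iff.1 e1
  obtain ⟨i2, hi2⟩ := Function.ne_iff.1 e2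
  intro k
  obtain ⟨r, hr⟩ := hx (k + i1 + i2 + 1)
  obtain ⟨r', hr'⟩ := hy (k + i1 + i2 + 1)
  obtain ⟨q, hq⟩ := hη (k + i1 + i2)
  have l1 := real_lt hP _ _ _ _ _ (Rz_sh hr) hq ⟨i1, by omega, hi1⟩ h1'
  have l2 := real_lt hP _ _ _ _ _ hq (Rz_sh hr') ⟨i2, by omega, hi2⟩ h2'
  have m1 : r ∈ (x 0).1 := hr 0 (by omega)
  have m2 : r' ∈ (x 0).1 := by rw [h0]; exact hr' 0 (by omega)
  have hcont : ContinuousOn f (x 0).1 := ((hP _).1 (x 0).2).2.1.2.2.1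
  obtain ⟨p, hp, rfl⟩ := (piece_oc hP (x 0)).isPreconnected.intermediate_value m1 m2 hcont
    ⟨l1.le, l2.le⟩
  refine ⟨p, fun j hj => ?_⟩
  cases j with
  | zero => exact hp
  | succ j => exact hq j (by omega)

theorem ordData (hP : IsNaturalPartition f I P) :
    OrdData (tau (kap hP) (eps f)) (Om f P) (La f P) where
  inj := tau_inj _ _ (kap_inj hP) eps_or
  o1 := tau_o1 _ _ (kap_inj hP) eps_or
  o2 := by
    intro J
    rcases eps_or (f := f) J with he | he
    · left
      rintro x y rfl h0 h
      exact tau_pos _ _ h0.symm he h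
    · right
      rintro x y rfl h0 h
      exact tau_neg _ _ h0.symm he h
  conv := Om_conv hP
  sub := La_sub
  shOm := Om_sh
  shLa := La_sh
  surj := La_surj
  limit := La_limit

theorem InC_iff {A : Type*} {w : List A} : ∀ {x : ℕ → A},
    InC w x ↔ ∀ i : Fin w.length, x i = w.get i := by
  induction w with
  | nil => intro x; simp [InC]
  | cons a w ih =>
    intro x
    change (x 0 = a ∧ InC w (sh x)) ↔ _
    rw [ih]
    constructor
    · rintro ⟨h1, h2⟩ ⟨i, hi⟩
      cases i with
      | zero => exact h1
      | succ i => exact h2 ⟨i, by simpa using hi⟩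
    · intro h
      exact ⟨h ⟨0, by simp⟩, fun i => h ⟨i.1 + 1, by simp⟩⟩

theorem LC_sub {n : ℕ} (hn : 2 ≤ n) : LC (symbolic f P) n ⊆
    {w : List (Alp P) | w.length = n ∧ LangW (La f P) w ∧ ∃ a w', w = a :: w' ∧
      ∃ ξ ∈ La f P, InC w' ξ ∧ cns a ξ ∉ La f P} := by
  rintro w ⟨hl, hne, hfol, hss⟩
  cases w with
  | nil => exact absurd rfl hne
  | cons a w' =>
    refine ⟨hl, ?_, a, w', rfl, ?_⟩
    · obtain ⟨y, B, hB, hw, -⟩ := Set.nonempty_iff_ne_empty.2 hfol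
      refine ⟨⟨fun k => B k, B, hB, fun k => rfl⟩, ?_⟩
      rw [InC_iff]
      exact hw
    · obtain ⟨y, ⟨B, hB, hw, hy⟩, hny⟩ := Set.exists_of_ssubset hss
      simp only [List.tail_cons] at hw hy
      refine ⟨fun k => B k, ⟨B, hB, fun k => rfl⟩, InC_iff.2 hw, ?_⟩
      rintro ⟨B', hB', he⟩
      apply hny
      refine ⟨B', hB', ?_, ?_⟩
      · rintro ⟨i, hi⟩
        rw [← he]
        cases i with
        | zero => rfl
        | succ i => exact hw ⟨i, by simpa using hi⟩
      · intro k
        have hl' : 1 ≤ w'.length := by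
          simp at hl; omega
        rw [hy]
        have h1 := he (w'.length + k)
        obtain ⟨t, ht⟩ : ∃ t, w'.length = t + 1 := ⟨w'.length - 1, by omega⟩
        have e1 : ((a :: w').length : ℤ) - 1 + k = ((w'.length + k : ℕ) : ℤ) := by
          simp
        rw [e1, ← h1, ht]
        have e2 : t + 1 + k = (t + k) + 1 := by omega
        rw [e2]
        change _ = B _
        congr 1
        push_cast
        ring

theorem hC_zero (hP : IsNaturalPartition f I P) : hC (symbolic f P) = 0 := by
  unfold hC
  refine main_abs (ordData hP) (fun n => Nat.card ↥(LC (symbolic f P) n)) (fun n hn => ?_)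
  change Nat.card ↥(LC (symbolic f P) n) ≤ _
  rw [Nat.card_coe_set_eq]
  exact Set.ncard_le_ncard (LC_sub hn)
    ((List.finite_length_eq (Alp P) n).subset (fun w h => h.1))

theorem sym_subshift : letI : TopologicalSpace (Alp P) := ⊥; IsSubshift (symbolic f P) := by
  refine ⟨sym_closed, ?_⟩
  ext B
  constructor
  · rintro ⟨B', hB', rfl⟩
    exact sym_translate hB' 1
  · intro hB
    refine ⟨_, sym_translate hB (-1), ?_⟩
    funext n
    change B (n + 1 + -1) = B n
    congr 1
    ring

end geom

end Aux

/-- If `f : I → I` is a piecewise monotonic map of a compact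
interval whose symbolic dynamics `Σ(f)` has positive topological entropy, then
`Σ(f)` is a subshift of quasi-finite type; indeed `h_𝒞(Σ(f)) = 0`. -/
theorem piecewiseMonotonic_qft
    (a b : ℝ) (hab : a < b) (f : ℝ → ℝ)
    (hmaps : Set.MapsTo f (Set.Icc a b) (Set.Icc a b))
    (hpm : IsPiecewiseMonotonic f (Set.Icc a b))
    (P : Finset (Set ℝ)) (hP : IsNaturalPartition f (Set.Icc a b) P)
    (hpos : 0 < hTop (symbolic f P)) :
    hC (symbolic f P) = 0 ∧
    (letI : TopologicalSpace {J // J ∈ P} := ⊥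
     IsQFT (symbolic f P)) := by
  have h0 := Aux.hC_zero hP
  refine ⟨h0, Aux.sym_subshift, ?_⟩
  exact lt_of_le_of_lt ((min_le_left _ _).trans h0.le) hpos

end QFTPaper
end

section
/- For every real number h ∈ (0,∞) there exists a subshift of quasi-finite type Σ with h_top(Σ) = h. Consequently there are uncountably many topological conjugacy classes of subshifts of quasi-finite type. -/
open Filter Set MeasureTheory

namespace QFTPaper

variable {A : Type*} {B : Type*}

/-! ### The beta-shift -/

section Beta

variable {b : ℕ} {β : ℝ}

/-- Value of a finite word in base `β`. -/
noncomputable def val (β : ℝ) : List (Fin (b + 1)) → ℝ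
  | [] => 0
  | c :: w => ((c : ℕ) + val β w) / β

/-- All suffixes have value at most one. -/
def Good (β : ℝ) : List (Fin (b + 1)) → Prop
  | [] => True
  | c :: w => val β (c :: w) ≤ 1 ∧ Good β w

/-- The word of length `n` of `x` at position `k`. -/
def wd (x : ℤ → Fin (b + 1)) : ℤ → ℕ → List (Fin (b + 1))
  | _, 0 => []
  | k, n + 1 => x k :: wd x (k + 1) n

/-- The beta shift. -/
def BS (b : ℕ) (β : ℝ) : Set (ℤ → Fin (b + 1)) :=
  {x | ∀ (k : ℤ) (n : ℕ), val β (wd x k n) ≤ 1}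

lemma val_nonneg (hβ : 1 < β) (w : List (Fin (b + 1))) : 0 ≤ val β w := by
  induction w with
  | nil => simp [val]
  | cons c w ih => simp only [val]; positivity

lemma Good.val_le (w : List (Fin (b + 1))) (h : Good β w) : val β w ≤ 1 := by
  cases w with
  | nil => simp [val]
  | cons c w => exact h.1

lemma Good.drop {w : List (Fin (b + 1))} (h : Good β w) (m : ℕ) : Good β (w.drop m) := by
  induction m generalizing w with
  | zero => simpa using h
  | succ m ih =>
    cases w with
    | nil => simp [Good]
    | cons c w => simpa using ih h.2

lemma wd_length (x : ℤ → Fin (b + 1)) (k : ℤ) (n : ℕ) : (wd x k n).length = n := by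
  induction n generalizing k with
  | zero => rfl
  | succ n ih => simp [wd, ih]

lemma wd_add (x : ℤ → Fin (b + 1)) (k : ℤ) (m n : ℕ) :
    wd x k (m + n) = wd x k m ++ wd x (k + m) n := by
  induction m generalizing k with
  | zero => simp [wd]
  | succ m ih =>
    rw [show m + 1 + n = (m + n) + 1 by ring]
    simp only [wd, ih, List.cons_append]
    congr 3
    push_cast; ring

lemma wd_congr (x y : ℤ → Fin (b + 1)) (k l : ℤ) (n : ℕ)
    (h : ∀ i : ℕ, x (k + i) = y (l + i)) : wd x k n = wd y l n := by
  induction n generalizing k l with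
  | zero => rfl
  | succ n ih =>
    simp only [wd]
    rw [ih (k + 1) (l + 1)]
    · have := h 0
      simp at this
      rw [this]
    · intro i
      have := h (i + 1)
      push_cast at this
      rw [add_assoc, add_assoc, add_comm (1 : ℤ)]; exact this

lemma wd_shift (x : ℤ → Fin (b + 1)) (k : ℤ) (n : ℕ) :
    wd (shift x) k n = wd x (k + 1) n := by
  apply wd_congr
  intro i
  simp only [shift]
  congr 1; ring

lemma eq_wd (w : List (Fin (b + 1))) (x : ℤ → Fin (b + 1)) (k : ℤ)
    (h : ∀ i : Fin w.length, x (k + (i : ℕ)) = w.get i) : w = wd x k w.length := by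
  induction w generalizing k with
  | nil => rfl
  | cons c w ih =>
    simp only [List.length_cons, wd]
    have h0 := h ⟨0, by simp⟩
    simp at h0
    rw [h0, ← ih (k + 1)]
    intro i
    have := h ⟨i + 1, by simp⟩
    simp only [List.get_eq_getElem, List.getElem_cons_succ] at this
    rw [List.get_eq_getElem, ← this]
    congr 1; push_cast; ring

lemma wd_mono (hβ : 1 < β) (x : ℤ → Fin (b + 1)) (k : ℤ) (n m : ℕ) :
    val β (wd x k n) ≤ val β (wd x k (n + m)) := by
  induction n generalizing k with
  | zero => simpa [wd, val] using val_nonneg hβ _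
  | succ n ih =>
    rw [show n + 1 + m = (n + m) + 1 by ring]
    simp only [wd, val]
    have := ih (k + 1)
    gcongr

lemma good_wd {x : ℤ → Fin (b + 1)} (hx : x ∈ BS b β) (k : ℤ) (n : ℕ) : Good β (wd x k n) := by
  induction n generalizing k with
  | zero => simp [wd, Good]
  | succ n ih => exact ⟨hx k (n + 1), ih _⟩

lemma mem_BS_of_zero (hβ : 1 < β) (x : ℤ → Fin (b + 1)) (h0 : ∀ k < 0, x k = 0)
    (h : ∀ (k : ℕ) (n : ℕ), val β (wd x k n) ≤ 1) : x ∈ BS b β := by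
  have key : ∀ (m : ℕ) (n : ℕ), val β (wd x (-(m : ℤ)) n) ≤ 1 := by
    intro m
    induction m with
    | zero => intro n; simpa using h 0 n
    | succ m ih =>
      intro n
      cases n with
      | zero => simp [wd, val]
      | succ n =>
        simp only [wd, val]
        rw [h0 _ (by push_cast; omega)]
        rw [show (-((m + 1 : ℕ) : ℤ) + 1) = -(m : ℤ) by push_cast; ring]
        rw [div_le_one (by linarith)]
        have := ih n
        simp
        linarith
  intro k n
  rcases le_total 0 k with hk | hk
  · obtain ⟨m, rfl⟩ := Int.eq_ofNat_of_zero_le hk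
    exact h m n
  · obtain ⟨m, hm⟩ := Int.eq_ofNat_of_zero_le (neg_nonneg.2 hk)
    rw [show k = -(m : ℤ) by omega]
    exact key m n

lemma val_wd_le (hβ : 1 < β) (x : ℤ → Fin (b + 1)) (w : List (Fin (b + 1))) (k : ℤ) (n : ℕ)
    (h : ∀ i : ℕ, x (k + i) = w.getD i 0) : val β (wd x k n) ≤ val β w := by
  induction n generalizing k w with
  | zero => simpa [wd, val] using val_nonneg hβ _
  | succ n ih =>
    have h0 := h 0
    have h1 : ∀ i : ℕ, x (k + 1 + i) = w.getD (i + 1) 0 := by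
      intro i
      rw [← h]; congr 1; push_cast; ring
    cases w with
    | nil =>
      simp at h0
      have := ih [] (k + 1) (by simpa using h1)
      simp only [wd, val, h0] at *
      simp
      exact div_nonpos_of_nonpos_of_nonneg this (by linarith)
    | cons c w =>
      simp at h0
      have := ih w (k + 1) (by simpa using h1)
      simp only [wd, val, h0] at *
      gcongr

lemma good_mem_lang (hβ : 1 < β) (w : List (Fin (b + 1))) (hw : Good β w) :
    ∃ x ∈ BS b β, OccursAt w x 0 := by
  refine ⟨fun n => if 0 ≤ n then w.getD n.toNat 0 else 0, ?_, ?_⟩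
  · apply mem_BS_of_zero hβ
    · intro k hk
      simp [not_le.2 hk]
    · intro k n
      refine (val_wd_le hβ _ (w.drop k) _ _ ?_).trans ((hw.drop k).val_le)
      intro i
      rw [if_pos (by positivity)]
      simp [List.getD_eq_getElem?_getD, List.getElem?_drop]
      rfl
  · intro i
    simp

lemma lang_BS (hβ : 1 < β) (n : ℕ) :
    Lang (BS b β) n = {w | w.length = n ∧ Good β w} := by
  ext w
  simp only [Lang, mem_ofPred_eq]
  refine and_congr_right fun _ => ⟨?_, good_mem_lang hβ w⟩
  rintro ⟨x, hx, h⟩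
  rw [eq_wd w x 0 h]
  exact good_wd hx _ _

lemma continuous_val (k : ℤ) (n : ℕ) :
    Continuous fun x : ℤ → Fin (b + 1) => val β (wd x k n) := by
  induction n generalizing k with
  | zero => simpa [wd, val] using continuous_const
  | succ n ih =>
    simp only [wd, val]
    have h1 : Continuous fun c : Fin (b + 1) => ((c : ℕ) : ℝ) := continuous_of_discreteTopology
    exact ((h1.comp (continuous_apply k)).add (ih _)).div_const _

lemma isSubshift_BS : IsSubshift (BS b β) := by
  constructor
  · simp only [BS, ofPred_forall]
    exact isClosed_iInter fun k => isClosed_iInter fun n =>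
      isClosed_le (continuous_val k n) continuous_const
  · ext x
    constructor
    · rintro ⟨y, hy, rfl⟩ k n
      rw [wd_shift]; exact hy _ _
    · intro hx
      refine ⟨fun n => x (n - 1), ?_, ?_⟩
      · intro k n
        rw [wd_congr _ x k (k - 1) n (fun i => by congr 1; ring)]
        exact hx _ _
      · funext n; simp [shift]

/-! Counting -/

/-- Good words of length `n` with value at most `t`. -/
def GW (b : ℕ) (β : ℝ) (n : ℕ) (t : ℝ) : Set (List (Fin (b + 1))) :=
  {w | w.length = n ∧ Good β w ∧ val β w ≤ t}

/-- Their number. -/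
noncomputable def cnt (b : ℕ) (β : ℝ) (n : ℕ) (t : ℝ) : ℕ := Nat.card (GW b β n t)

lemma GW_finite (n : ℕ) (t : ℝ) : Finite (GW b β n t) :=
  ((List.finite_length_eq (Fin (b + 1)) n).subset fun _ h => h.1)

lemma mem_GW_succ (hβ : 1 < β) (n : ℕ) (t : ℝ) (ht : t ≤ 1) (c : Fin (b + 1))
    (w : List (Fin (b + 1))) :
    c :: w ∈ GW b β (n + 1) t ↔ w ∈ GW b β n (β * t - (c : ℕ)) := by
  have : val β (c :: w) ≤ t ↔ val β w ≤ β * t - (c : ℕ) := by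
    simp only [val]
    rw [div_le_iff₀ (by linarith)]
    constructor <;> intro h <;> linarith
  simp only [GW, mem_ofPred_eq, List.length_cons, Good, ← this]
  constructor
  · rintro ⟨h1, h2, h3⟩; exact ⟨by omega, h2.2, h3⟩
  · rintro ⟨h1, h2, h3⟩; exact ⟨by omega, ⟨h3.trans ht, h2⟩, h3⟩

lemma cnt_succ (hβ : 1 < β) (n : ℕ) (t : ℝ) (ht : t ≤ 1) :
    cnt b β (n + 1) t = ∑ c ∈ Finset.range (b + 1), cnt b β n (β * t - c) := by
  rw [← Fin.sum_univ_eq_sum_range (fun c => cnt b β n (β * t - c))]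
  have := fun c : Fin (b + 1) => GW_finite (b := b) (β := β) n (β * t - (c : ℕ))
  simp only [cnt]
  rw [← Nat.card_sigma (β := fun c : Fin (b + 1) => GW b β n (β * t - (c : ℕ)))]
  symm
  refine Nat.card_eq_of_bijective
    (fun p => ⟨p.1 :: p.2.1, (mem_GW_succ hβ n t ht p.1 p.2.1).2 p.2.2⟩) ⟨?_, ?_⟩
  · rintro ⟨c, w, hw⟩ ⟨d, v, hv⟩ h
    simp at h
    obtain ⟨rfl, rfl⟩ := h
    rfl
  · rintro ⟨w, hw⟩
    cases w with
    | nil => simp [GW] at hw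
    | cons c w => exact ⟨⟨c, w, (mem_GW_succ hβ n t ht c w).1 hw⟩, rfl⟩

lemma cnt_neg (hβ : 1 < β) (n : ℕ) (t : ℝ) (ht : t < 0) : cnt b β n t = 0 := by
  have : GW b β n t = ∅ := by
    ext w
    simp only [GW, mem_ofPred_eq, mem_empty_iff_false, iff_false]
    rintro ⟨_, _, h⟩
    linarith [val_nonneg hβ w]
  simp [cnt, this]

lemma cnt_ge_one (n : ℕ) (t : ℝ) (ht : 1 ≤ t) : cnt b β n t = cnt b β n 1 := by
  have : GW b β n t = GW b β n 1 := by
    ext w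
    simp only [GW, mem_ofPred_eq]
    constructor
    · rintro ⟨h1, h2, h3⟩; exact ⟨h1, h2, h2.val_le⟩
    · rintro ⟨h1, h2, h3⟩; exact ⟨h1, h2, h3.trans ht⟩
  simp [cnt, this]

lemma cnt_zero (t : ℝ) (ht : 0 ≤ t) : cnt b β 0 t = 1 := by
  have : GW b β 0 t = {[]} := by
    ext w
    simp only [GW, mem_ofPred_eq, mem_singleton_iff, List.length_eq_zero_iff]
    constructor
    · exact fun h => h.1
    · rintro rfl; simpa [Good, val] using ht
  simp [cnt, this]

lemma cnt_rec (hβ : 1 < β) (hb : β < b + 1) (n : ℕ) (t : ℝ) (h0 : 0 ≤ t) (h1 : t ≤ 1) :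
    cnt b β (n + 1) t = ⌊β * t⌋₊ * cnt b β n 1 + cnt b β n (β * t - ⌊β * t⌋₊) := by
  have hbt : 0 ≤ β * t := by positivity
  have hq : ⌊β * t⌋₊ < b + 1 := by
    rw [Nat.floor_lt hbt]; push_cast; nlinarith
  rw [cnt_succ hβ n t h1, ← Finset.sum_subset (Finset.range_subset_range.2 hq),
    Finset.sum_range_succ, Finset.sum_congr rfl (g := fun _ => cnt b β n 1)]
  · simp
  · intro c hc
    rw [Finset.mem_range] at hc
    apply cnt_ge_one
    have : ((c + 1 : ℕ) : ℝ) ≤ β * t := (Nat.le_floor_iff hbt).1 hc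
    push_cast at this; linarith
  · intro c _ hc
    rw [Finset.mem_range, not_lt] at hc
    apply cnt_neg hβ
    have : β * t < c := (Nat.floor_lt hbt).1 (by omega)
    linarith

lemma cnt_lower (hβ : 1 < β) (hb : β < b + 1) (n : ℕ) (t : ℝ) (h0 : 0 ≤ t) (h1 : t ≤ 1) :
    β ^ n * t ≤ cnt b β n t := by
  induction n generalizing t with
  | zero => simpa [cnt_zero t h0] using h1
  | succ n ih =>
    have hbt : 0 ≤ β * t := by positivity
    rw [cnt_rec hβ hb n t h0 h1]
    have e1 := ih 1 (by norm_num) le_rfl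
    have e2 := ih (β * t - ⌊β * t⌋₊) (by linarith [Nat.floor_le hbt])
      (by linarith [Nat.lt_floor_add_one (β * t)])
    push_cast
    calc β ^ (n + 1) * t = ⌊β * t⌋₊ * (β ^ n * 1) + β ^ n * (β * t - ⌊β * t⌋₊) := by ring
      _ ≤ _ := by gcongr

lemma cnt_upper_aux (hβ : 1 < β) (hb : β < b + 1) (C : ℝ) (hC : 0 ≤ C) (n : ℕ)
    (h : ∀ m < n, (cnt b β m 1 : ℝ) ≤ C * β ^ m) (t : ℝ) (h0 : 0 ≤ t) (h1 : t ≤ 1) :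
    (cnt b β n t : ℝ) ≤ C * β ^ n * t + 1 := by
  induction n generalizing t with
  | zero => simp [cnt_zero t h0]; positivity
  | succ n ih =>
    have hbt : 0 ≤ β * t := by positivity
    rw [cnt_rec hβ hb n t h0 h1]
    have e1 := h n (by omega)
    have e2 := ih (fun m hm => h m (by omega))
      (β * t - ⌊β * t⌋₊) (by linarith [Nat.floor_le hbt])
      (by linarith [Nat.lt_floor_add_one (β * t)])
    push_cast
    calc _ ≤ ⌊β * t⌋₊ * (C * β ^ n) + (C * β ^ n * (β * t - ⌊β * t⌋₊) + 1) := by gcongr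
      _ = _ := by ring

lemma cnt_upper (hβ : 1 < β) (hb : β < b + 1) (n : ℕ) :
    (cnt b β n 1 : ℝ) ≤ (n + 1) * β ^ n := by
  induction n using Nat.strong_induction_on with
  | _ n ih =>
    have := cnt_upper_aux hβ hb n (by positivity) n (fun m hm => (ih m hm).trans (by
      have : ((m + 1 : ℕ) : ℝ) ≤ n := by exact_mod_cast hm
      push_cast at this
      gcongr)) 1 (by norm_num) le_rfl
    have h2 : 1 ≤ β ^ n := one_le_pow₀ hβ.le
    linarith

lemma card_lang (hβ : 1 < β) (n : ℕ) : Nat.card (Lang (BS b β) n) = cnt b β n 1 := by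
  rw [lang_BS hβ, cnt]
  congr 2
  ext w
  simp only [GW, mem_ofPred_eq]
  constructor
  · rintro ⟨h1, h2⟩; exact ⟨h1, h2, h2.val_le⟩
  · rintro ⟨h1, h2, h3⟩; exact ⟨h1, h2⟩

lemma lang_lower (hβ : 1 < β) (hb : β < b + 1) (n : ℕ) :
    β ^ n ≤ Nat.card (Lang (BS b β) n) := by
  rw [card_lang hβ]
  simpa using cnt_lower hβ hb n 1 (by norm_num) le_rfl

lemma lang_upper (hβ : 1 < β) (hb : β < b + 1) (n : ℕ) :
    (Nat.card (Lang (BS b β) n) : ℝ) ≤ (n + 1) * β ^ n := by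
  rw [card_lang hβ]
  exact cnt_upper hβ hb n

lemma tendsto_log_div : Tendsto (fun n : ℕ => Real.log ((n : ℝ) + 1) / n) atTop (nhds 0) := by
  have h1 : Tendsto (fun x : ℝ => Real.log x / x) atTop (nhds 0) := by
    simpa using Real.tendsto_pow_log_div_mul_add_atTop 1 0 1 one_ne_zero
  have h2 : Tendsto (fun n : ℕ => Real.log ((n : ℝ) + 1) / ((n : ℝ) + 1)) atTop (nhds 0) :=
    h1.comp (tendsto_atTop_add_const_right _ _ tendsto_natCast_atTop_atTop)
  have h3 := h2.mul_const 2
  rw [zero_mul] at h3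
  refine squeeze_zero' (Eventually.of_forall fun n => ?_) ?_ h3
  · exact div_nonneg (Real.log_nonneg (by linarith [Nat.cast_nonneg (α := ℝ) n])) (by positivity)
  · filter_upwards [eventually_ge_atTop 1] with n hn
    have hn' : (1 : ℝ) ≤ n := by exact_mod_cast hn
    have : 0 ≤ Real.log ((n : ℝ) + 1) := Real.log_nonneg (by linarith)
    rw [div_mul_eq_mul_div, div_le_div_iff₀ (by linarith) (by linarith)]
    nlinarith

lemma hTop_BS (hβ : 1 < β) (hb : β < b + 1) : hTop (BS b β) = Real.log β := by
  apply Tendsto.limsup_eq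
  have hpos : ∀ n : ℕ, 0 < β ^ n := fun n => by positivity
  have h3 : Tendsto (fun n : ℕ => Real.log ((n : ℝ) + 1) / n + Real.log β) atTop
      (nhds (Real.log β)) := by
    simpa using tendsto_log_div.add_const (Real.log β)
  refine tendsto_of_tendsto_of_tendsto_of_le_of_le' tendsto_const_nhds h3 ?_ ?_
  · filter_upwards [eventually_ge_atTop 1] with n hn
    have hn' : (1 : ℝ) ≤ n := by exact_mod_cast hn
    rw [le_div_iff₀ (by linarith)]
    have := Real.log_le_log (hpos n) (lang_lower hβ hb n)
    rw [Real.log_pow] at this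
    linarith
  · filter_upwards [eventually_ge_atTop 1] with n hn
    have hn' : (1 : ℝ) ≤ n := by exact_mod_cast hn
    rw [div_add' _ _ _ (by linarith)]
    gcongr
    have := Real.log_le_log ((hpos n).trans_le (lang_lower hβ hb n)) (lang_upper hβ hb n)
    rw [Real.log_mul (by linarith) (hpos n).ne', Real.log_pow] at this
    linarith

/-! Constraints -/

lemma word_unique (hβ : 1 < β) (w w' u u' : List (Fin (b + 1))) (t : ℝ)
    (hl : w.length = w'.length)
    (h1 : val β w ≤ t) (h2 : t < val β (w ++ u)) (h3 : Good β (w ++ u).tail)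
    (h1' : val β w' ≤ t) (h2' : t < val β (w' ++ u')) (h3' : Good β (w' ++ u').tail) :
    w = w' := by
  induction w generalizing w' t with
  | nil => simpa using hl.symm
  | cons c w ih =>
    cases w' with
    | nil => simp at hl
    | cons d w' =>
      have hβ0 : 0 < β := by linarith
      simp only [List.cons_append, val, List.tail_cons, List.length_cons] at *
      rw [div_le_iff₀ hβ0] at h1 h1'
      rw [lt_div_iff₀ hβ0] at h2 h2'
      have a1 := h3.val_le
      have a2 := h3'.val_le
      have a3 := val_nonneg hβ w
      have a4 := val_nonneg hβ w'
      have k1 : ((c : ℕ) : ℝ) < ((d : ℕ) + 1 : ℕ) := by push_cast; linarith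
      have k2 : ((d : ℕ) : ℝ) < ((c : ℕ) + 1 : ℕ) := by push_cast; linarith
      have k1' := Nat.cast_lt.1 k1
      have k2' := Nat.cast_lt.1 k2
      have hcd : c = d := Fin.ext (by omega)
      subst hcd
      have ht : ∀ l : List (Fin (b + 1)), Good β l → Good β l.tail := by
        intro l hl
        simpa using hl.drop 1
      rw [ih w' (t * β - (c : ℕ)) (by omega) (by linarith) (by linarith) (ht _ h3)
        (by linarith) (by linarith) (ht _ h3')]

lemma constraint_prop (hβ : 1 < β) (w : List (Fin (b + 1))) (hlen : 2 ≤ w.length)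
    (h : IsLeftConstraint (BS b β) w) :
    val β w ≤ 1 ∧ ∃ u, 1 < val β (w ++ u) ∧ Good β (w ++ u).tail := by
  obtain ⟨-, hne, hss⟩ := h
  have hw1 : val β w ≤ 1 := by
    obtain ⟨y, B, hB, hw, -⟩ := Set.nonempty_iff_ne_empty.2 hne
    rw [eq_wd w B 0 (by simpa using hw)]
    exact hB _ _
  refine ⟨hw1, ?_⟩
  obtain ⟨y, hy, hy'⟩ := Set.exists_of_ssubset hss
  cases w with
  | nil => simp at hlen
  | cons c w =>
    simp only [List.tail_cons, List.length_cons] at *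
    obtain ⟨B, hB, hw, hyB⟩ := hy
    have hwB : w = wd B 0 w.length := eq_wd w B 0 (by simpa using hw)
    by_contra hcon
    push Not at hcon
    apply hy'
    let B' : ℤ → Fin (b + 1) := fun n => if n < 0 then 0 else if n = 0 then c else B (n - 1)
    have hB'p : ∀ n : ℤ, 0 < n → B' n = B (n - 1) := by
      intro n hn
      simp only [B']
      rw [if_neg (by omega), if_neg (by omega)]
    have hB'0 : B' 0 = c := by simp [B']
    refine ⟨B', ?_, ?_, ?_⟩
    · apply mem_BS_of_zero hβ
      · intro k hk; simp [B', hk]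
      · have hk1 : ∀ (k n : ℕ), wd B' ((k : ℤ) + 1) n = wd B k n := by
          intro k n
          apply wd_congr
          intro i
          rw [hB'p _ (by omega)]
          congr 1; ring
        intro k n
        cases k with
        | zero =>
          refine (wd_mono hβ _ _ n (w.length + 1)).trans ?_
          have e1 := hk1 0 (w.length + n)
          rw [wd_add] at e1
          simp only [Nat.cast_zero, zero_add] at e1
          have e2 := wd_add B 0 w.length n
          rw [← hwB] at e2
          have : wd B' ((0 : ℕ) : ℤ) (n + (w.length + 1)) =
              c :: w ++ wd B (0 + (w.length : ℤ)) n := by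
            rw [show n + (w.length + 1) = (w.length + n) + 1 by ring]
            simp only [wd, List.cons_append, Nat.cast_zero, hB'0]
            have e3 := hk1 0 (w.length + n)
            simp only [Nat.cast_zero] at e3
            rw [← e2, e3]
          rw [this]
          by_contra hgt
          push Not at hgt
          refine hcon _ hgt ?_
          simp only [List.cons_append, List.tail_cons]
          rw [← e2]
          exact good_wd hB _ _
        | succ k =>
          push_cast
          rw [hk1]
          exact hB _ _
    · intro i
      rcases i with ⟨i, hi⟩
      cases i with
      | zero => simpa using hB'0
      | succ i =>
        simp only [List.length_cons] at hi
        have := hw ⟨i, by omega⟩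
        rw [hB'p _ (by push_cast; omega)]
        simpa using this
    · intro k
      rw [hyB, hB'p _ (by simp only [List.length_cons]; push_cast; omega)]
      congr 1; simp only [List.length_cons]; push_cast; ring

lemma hC_BS (hβ : 1 < β) : hC (BS b β) = 0 := by
  apply Tendsto.limsup_eq
  refine tendsto_const_nhds.congr' ?_
  filter_upwards [eventually_ge_atTop 2] with n hn
  have hs : Subsingleton (LC (BS b β) n) := by
    constructor
    rintro ⟨w, hw, hc⟩ ⟨w', hw', hc'⟩
    obtain ⟨h1, u, h2, h3⟩ := constraint_prop hβ w (by omega) hc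
    obtain ⟨h1', u', h2', h3'⟩ := constraint_prop hβ w' (by omega) hc'
    exact Subtype.ext (word_unique hβ w w' u u' 1 (by omega) h1 h2 h3 h1' h2' h3')
  have : Nat.card (LC (BS b β) n) ≤ 1 := Finite.card_le_one_iff_subsingleton.2 hs
  have : (Nat.card (LC (BS b β) n) : ℝ) ≤ 1 := by exact_mod_cast this
  have h2 := Real.log_nonpos (by positivity) this
  rw [max_eq_left h2, zero_div]

lemma isQFT_BS (hβ : 1 < β) (hb : β < b + 1) : IsQFT (BS b β) := by
  refine ⟨isSubshift_BS, ?_⟩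
  rw [hTop_BS hβ hb]
  refine (min_le_left _ _).trans_lt ?_
  rw [hC_BS hβ]
  exact Real.log_pos hβ

end Beta

/-! ### Conjugacy -/

lemma shift_mem [TopologicalSpace A] {X : Set (ℤ → A)} (hX : IsSubshift X) {x : ℤ → A}
    (hx : x ∈ X) : shift x ∈ X := hX.2 ▸ mem_image_of_mem _ hx

lemma Conjugate.symm' [TopologicalSpace A] [TopologicalSpace B] {X : Set (ℤ → A)}
    {Y : Set (ℤ → B)} (hX : IsSubshift X) (h : Conjugate X Y) : Conjugate Y X := by
  obtain ⟨φ, hφ⟩ := h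
  refine ⟨φ.symm, fun y y' hy => ?_⟩
  have h1 := hφ (φ.symm y) ⟨shift (φ.symm y), shift_mem hX (φ.symm y).2⟩ rfl
  rw [φ.apply_symm_apply, ← hy] at h1
  have h2 := Subtype.ext h1
  rw [← h2, φ.symm_apply_apply]

lemma exists_window [Fintype A] [TopologicalSpace A] [DiscreteTopology A]
    [TopologicalSpace B] [DiscreteTopology B] {X : Set (ℤ → A)} (hX : IsClosed X)
    (f : X → B) (hf : Continuous f) :
    ∃ r : ℕ, ∀ x x' : X, (∀ i : ℤ, -r ≤ i → i ≤ r → x.1 i = x'.1 i) → f x = f x' := by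
  have : CompactSpace X := isCompact_iff_compactSpace.1 hX.isCompact
  let U : ℕ → Set X := fun r =>
    {x | ∀ x' : X, (∀ i : ℤ, -r ≤ i → i ≤ r → x.1 i = x'.1 i) → f x = f x'}
  have hcyl : ∀ (r : ℕ) (x : X), {z : X | ∀ i : ℤ, -r ≤ i → i ≤ r → x.1 i = z.1 i} ∈ nhds x := by
    intro r x
    have e : {z : X | ∀ i : ℤ, -r ≤ i → i ≤ r → x.1 i = z.1 i}
        = ⋂ i ∈ Set.Icc (-(r : ℤ)) r, {z : X | z.1 i = x.1 i} := by
      ext z; simp only [mem_ofPred_eq, mem_iInter, mem_Icc]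
      exact ⟨fun h i hi => (h i hi.1 hi.2).symm, fun h i h1 h2 => (h i ⟨h1, h2⟩).symm⟩
    rw [e, Filter.biInter_mem (Set.finite_Icc _ _)]
    intro i _
    have hc : Continuous fun z : X => z.1 i := (continuous_apply i).comp continuous_subtype_val
    exact (isOpen_discrete {x.1 i}).preimage hc |>.mem_nhds rfl
  have hUo : ∀ r, IsOpen (U r) := by
    intro r
    rw [isOpen_iff_mem_nhds]
    intro x hx
    filter_upwards [hcyl r x] with z hz x' hzx'
    rw [← hx z hz]
    exact hx x' fun i h1 h2 => (hz i h1 h2).trans (hzx' i h1 h2)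
  have hmono : Monotone U := by
    intro r s hrs x hx x' h
    have : (r : ℤ) ≤ s := by exact_mod_cast hrs
    exact hx x' fun i h1 h2 => h i (by omega) (by omega)
  have hcov : (univ : Set X) ⊆ ⋃ r, U r := by
    intro x _
    have h1 : f ⁻¹' {f x} ∈ nhds x := (isOpen_discrete {f x}).preimage hf |>.mem_nhds rfl
    rw [nhds_subtype_eq_comap, nhds_pi, Filter.mem_comap] at h1
    obtain ⟨t, ht, hts⟩ := h1
    rw [Filter.mem_pi] at ht
    obtain ⟨I, hI, V, hV, hIV⟩ := ht
    obtain ⟨r, hr⟩ : ∃ r : ℕ, ∀ i ∈ I, i.natAbs ≤ r := by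
      obtain ⟨r, hr⟩ := (hI.image Int.natAbs).bddAbove
      exact ⟨r, fun i hi => hr (mem_image_of_mem _ hi)⟩
    refine mem_iUnion.2 ⟨r, fun x' hx' => ?_⟩
    have : x' ∈ f ⁻¹' {f x} := by
      apply hts
      apply hIV
      intro i hi
      have := hr i hi
      show x'.1 i ∈ V i
      rw [← hx' i (by omega) (by omega)]
      exact mem_of_mem_nhds (hV i)
    exact this.symm
  obtain ⟨r, hr⟩ := isCompact_univ.elim_directed_cover U hUo hcov (directed_of_isDirected_le hmono)
  exact ⟨r, fun x x' h => hr (mem_univ x) x' h⟩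

lemma lang_finite [Fintype A] (X : Set (ℤ → A)) (n : ℕ) : (Lang X n).Finite :=
  (List.finite_length_eq A n).subset fun _ h => h.1

lemma lang_eq (X : Set (ℤ → A)) (n : ℕ) :
    Lang X n = (fun x : ℤ → A => List.ofFn fun i : Fin n => x (i : ℕ)) '' X := by
  ext w
  constructor
  · rintro ⟨rfl, x, hx, h⟩
    refine ⟨x, hx, ?_⟩
    apply List.ext_get (by simp)
    intro i h1 h2
    have := h ⟨i, h2⟩
    simpa using this
  · rintro ⟨x, hx, rfl⟩
    exact ⟨by simp, x, hx, fun i => by simp⟩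

lemma conj_card [Fintype A] [Fintype B] [TopologicalSpace A] [DiscreteTopology A]
    [TopologicalSpace B] [DiscreteTopology B] {X : Set (ℤ → A)} {Y : Set (ℤ → B)}
    (hX : IsSubshift X) (hY : IsSubshift Y) (h : Conjugate X Y) :
    ∃ r : ℕ, ∀ n, Nat.card (Lang Y n) ≤ Nat.card (Lang X (n + 2 * r)) := by
  obtain ⟨φ, hφ⟩ := h
  obtain ⟨r, hr⟩ := exists_window hX.1 (fun x => (φ x).1 0)
    ((continuous_apply 0).comp (continuous_subtype_val.comp φ.continuous))
  have hit : ∀ n : ℕ, ∀ x : ℤ → A, x ∈ X → (fun k => x (k + n)) ∈ X := by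
    intro n
    induction n with
    | zero => intro x hx; simpa using hx
    | succ n ih =>
      intro x hx
      have := ih _ (shift_mem hX hx)
      convert this using 2
      simp only [shift]
      congr 1; push_cast; ring
  have hφit : ∀ (n : ℕ) (x : X) (k : ℤ),
      (φ ⟨_, hit n x.1 x.2⟩).1 k = (φ x).1 (k + n) := by
    intro n
    induction n with
    | zero => intro x k; simp
    | succ n ih =>
      intro x k
      have h1 := ih ⟨_, shift_mem hX x.2⟩ k
      rw [hφ x ⟨_, shift_mem hX x.2⟩ rfl] at h1
      simp only [shift] at h1
      have e : (fun k : ℤ => x.1 (k + n + 1)) = fun k : ℤ => x.1 (k + ((n + 1 : ℕ) : ℤ)) := by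
        funext k; push_cast; ring_nf
      simp only [e] at h1
      rw [h1]
      push_cast; ring_nf
  refine ⟨r, fun n => ?_⟩
  -- surjection from words of `X`
  have : ∀ v : Lang Y n, ∃ w : Lang X (n + 2 * r), ∃ x : X,
      w.1 = List.ofFn (fun i : Fin (n + 2 * r) => x.1 (i : ℕ)) ∧
      v.1 = List.ofFn (fun i : Fin n => (φ x).1 ((i : ℕ) + r)) := by
    rintro ⟨v, hv⟩
    rw [lang_eq] at hv
    obtain ⟨y, hy, rfl⟩ := hv
    -- choose a preimage of `y` under the `r`-fold shift
    have hpre : ∀ m : ℕ, ∃ z ∈ Y, (fun k : ℤ => z (k + m)) = y := by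
      intro m
      induction m with
      | zero => exact ⟨y, hy, by simp⟩
      | succ m ih =>
        obtain ⟨z, hz, hzy⟩ := ih
        rw [← hY.2] at hz
        obtain ⟨z', hz', rfl⟩ := hz
        refine ⟨z', hz', ?_⟩
        rw [← hzy]
        funext k
        simp only [shift]
        congr 1; push_cast; ring
    obtain ⟨z, hz, hzy⟩ := hpre r
    refine ⟨⟨_, by rw [lang_eq]; exact mem_image_of_mem _ (φ.symm ⟨z, hz⟩).2⟩, φ.symm ⟨z, hz⟩,
      rfl, ?_⟩
    simp only [φ.apply_symm_apply]
    congr 1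
    funext i
    rw [← hzy]
  choose g hg using this
  have : Finite (Lang X (n + 2 * r)) := lang_finite X _
  refine Nat.card_le_card_of_injective g ?_
  intro v v' hvv
  obtain ⟨x, hx1, hx2⟩ := hg v
  obtain ⟨x', hx1', hx2'⟩ := hg v'
  apply Subtype.ext
  rw [hx2, hx2']
  congr 1
  funext i
  rw [hvv, hx1'] at hx1
  have hxx := List.ofFn_injective hx1
  have key := hr ⟨_, hit (i + r) x.1 x.2⟩ ⟨_, hit (i + r) x'.1 x'.2⟩ (by
    intro j hj1 hj2
    have := congrFun hxx ⟨(j + (i + r : ℕ)).toNat, by omega⟩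
    simp only at this
    rw [Int.toNat_of_nonneg (by push_cast; omega)] at this
    exact this.symm)
  simp only [hφit] at key
  simpa using key

lemma beta_le {b b' : ℕ} {β β' : ℝ} (hβ : 1 < β) (hb : β < b + 1) (hβ' : 1 < β')
    (hb' : β' < b' + 1) (h : Conjugate (BS b β) (BS b' β')) : β' ≤ β := by
  obtain ⟨r, hr⟩ := conj_card isSubshift_BS isSubshift_BS h
  by_contra hlt
  push Not at hlt
  have h1 : ∀ n : ℕ, β' ^ n ≤ ((n : ℝ) + 2 * r + 1) * β ^ (n + 2 * r) := by
    intro n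
    calc β' ^ n ≤ Nat.card (Lang (BS b' β') n) := lang_lower hβ' hb' n
      _ ≤ Nat.card (Lang (BS b β) (n + 2 * r)) := by exact_mod_cast hr n
      _ ≤ _ := by simpa using lang_upper hβ hb (n + 2 * r)
  -- take logs
  have h2 : ∀ n : ℕ, n * (Real.log β' - Real.log β) - 2 * r * Real.log β ≤
      Real.log ((n + 2 * r : ℕ) + 1) := by
    intro n
    have := Real.log_le_log (by positivity) (h1 n)
    rw [Real.log_mul (by positivity) (by positivity), Real.log_pow, Real.log_pow] at this
    push_cast at this ⊢
    linarith
  have hd : 0 < Real.log β' - Real.log β := by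
    linarith [Real.log_lt_log (by linarith) hlt]
  set d := Real.log β' - Real.log β
  have h3 : Tendsto (fun n : ℕ => Real.log ((n : ℝ) + 1) / n) atTop (nhds 0) := tendsto_log_div
  have h4 := (h3.comp (tendsto_add_atTop_nat (2 * r))).eventually_lt_const (half_pos hd)
  have h5 : ∀ᶠ n : ℕ in atTop, (2 * r * d + 4 * r * Real.log β) / d + 1 < (n : ℝ) :=
    tendsto_natCast_atTop_atTop.eventually_gt_atTop _
  obtain ⟨n, h6, h7⟩ := (h4.and h5).exists
  have h8 := h2 n
  have hlb := Real.log_pos hβ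
  have hn : (0 : ℝ) < n := lt_of_le_of_lt (by positivity) h7
  simp only [Function.comp] at h6
  rw [div_lt_iff₀ (by push_cast; positivity)] at h6
  have h9 : (2 * r * d + 4 * r * Real.log β) / d < (n : ℝ) := by linarith
  rw [div_lt_iff₀ hd] at h9
  push_cast at h6 h8
  nlinarith

/-- For every `h ∈ (0,∞)` there is a subshift of quasi-finite
type with topological entropy `h`; consequently there is an uncountable
(ℝ-indexed) family of pairwise non-conjugate subshifts of quasi-finite type. -/
theorem qft_entropy_arbitrary :
    (∀ h : ℝ, 0 < h →
      ∃ (A : Type) (_ : Fintype A) (tA : TopologicalSpace A)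
        (_ : @DiscreteTopology A tA) (X : Set (ℤ → A)),
          @IsQFT A tA X ∧ hTop X = h) ∧
    (∃ (Alph : ℝ → Type) (_ : ∀ h, Fintype (Alph h))
        (tA : ∀ h, TopologicalSpace (Alph h))
        (_ : ∀ h, @DiscreteTopology (Alph h) (tA h))
        (S : ∀ h, Set (ℤ → Alph h)),
          (∀ h : ℝ, 0 < h → @IsQFT (Alph h) (tA h) (S h)) ∧
          (∀ h h' : ℝ, 0 < h → 0 < h' → h ≠ h' →
            ¬ @Conjugate (Alph h) (Alph h') (tA h) (tA h') (S h) (S h'))) := by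
  have hβ : ∀ h : ℝ, 0 < h → 1 < Real.exp h := fun h hh => by
    simpa using hh
  have hb : ∀ h : ℝ, Real.exp h < (⌊Real.exp h⌋₊ : ℝ) + 1 := fun h => Nat.lt_floor_add_one _
  constructor
  · intro h hh
    refine ⟨Fin (⌊Real.exp h⌋₊ + 1), inferInstance, inferInstance, inferInstance,
      BS _ (Real.exp h), isQFT_BS (hβ h hh) (hb h), ?_⟩
    rw [hTop_BS (hβ h hh) (hb h), Real.log_exp]
  · refine ⟨fun h => Fin (⌊Real.exp h⌋₊ + 1), fun _ => inferInstance, fun _ => inferInstance,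
      fun _ => inferInstance, fun h => BS _ (Real.exp h),
      fun h hh => isQFT_BS (hβ h hh) (hb h), ?_⟩
    intro h h' hh hh' hne hc
    apply hne
    apply Real.exp_injective
    apply le_antisymm
    · exact beta_le (hβ h' hh') (hb h') (hβ h hh) (hb h) (hc.symm' isSubshift_BS)
    · exact beta_le (hβ h hh) (hb h) (hβ h' hh') (hb h') hc

end QFTPaper
end
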